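/- arXiv:1910.14608 — 3 statements merged into one kernel-verified Lean document; each statement's English description precedes it below -/
import Mathlib

section
/- Let C be a 2-reduced cocommutative dg coalgebra over ℚ with universal twisting chain t : C ⇝ ΩC. For left dg ΩC-modules A and B, endow the tensor product A ⊗ B with the ΩC-action determined on generators by tc·(a ⊗ b) = (tc·a) ⊗ b + (−1)^{|a|(|c|−1)} a ⊗ (tc·b). Then there is an isomorphism of C-comodules, natural in A and B: (C ⊗^t A) □_C (C ⊗^t B) ≅ C ⊗^t (A ⊗ B); that is, the cotensor product of twisted coextensions is the twisted coextension of the tensor product. -/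
open scoped TensorProduct

noncomputable section

/-- A homologically graded differential graded `ℚ`-vector space (chain complex of
`ℚ`-vector spaces presented as a graded module with a degree `-1` square-zero differential). -/
structure DGVect : Type 1 where
  carrier : Type
  [isAddCommGroup : AddCommGroup carrier]
  [isModule : Module ℚ carrier]
  grading : ℤ → Submodule ℚ carrier
  [isDecomp : DirectSum.Decomposition grading]
  d : carrier →ₗ[ℚ] carrier
  d_mem : ∀ (n : ℤ), ∀ x ∈ grading n, d x ∈ grading (n - 1)
  d_sq : d.comp d = 0

attribute [instance] DGVect.isAddCommGroup DGVect.isModule DGVect.isDecomp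

/-- The operator acting on the degree `n` graded component by `(-1)^(k*n)`. -/
def signOpOf {V : Type} [AddCommGroup V] [Module ℚ V] (g : ℤ → Submodule ℚ V)
    [DirectSum.Decomposition g] (k : ℤ) : V →ₗ[ℚ] V :=
  (DirectSum.toModule ℚ ℤ V fun n => ((-1 : ℚ) ^ (k * n)) • (g n).subtype).comp
    (DirectSum.decomposeLinearEquiv g).toLinearMap

/-- The Koszul parity operator, acting by `(-1)^n` in degree `n`. -/
def parityOf {V : Type} [AddCommGroup V] [Module ℚ V] (g : ℤ → Submodule ℚ V)
    [DirectSum.Decomposition g] : V →ₗ[ℚ] V := signOpOf g 1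

def DGVect.parity (V : DGVect) : V.carrier →ₗ[ℚ] V.carrier := parityOf V.grading

/-- A graded object is bounded below if it vanishes in all sufficiently negative degrees. -/
def DGVect.BoundedBelow (V : DGVect) : Prop := ∃ b : ℤ, ∀ n : ℤ, n < b → V.grading n = ⊥

/-- The Koszul signed braiding `v ⊗ w ↦ (-1)^{|v||w|} w ⊗ v` of graded vector spaces. -/
def kSwapOf {V W : Type} [AddCommGroup V] [Module ℚ V] [AddCommGroup W] [Module ℚ W]
    (gV : ℤ → Submodule ℚ V) (gW : ℤ → Submodule ℚ W)
    [DirectSum.Decomposition gV] [DirectSum.Decomposition gW] :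
    V ⊗[ℚ] W →ₗ[ℚ] W ⊗[ℚ] V :=
  TensorProduct.lift
    ((DirectSum.toModule ℚ ℤ (W →ₗ[ℚ] W ⊗[ℚ] V) (fun i =>
        (((DirectSum.toModule ℚ ℤ (V →ₗ[ℚ] W ⊗[ℚ] V) (fun j =>
              ((-1 : ℚ) ^ (i * j)) • ((TensorProduct.mk ℚ W V).comp (gW j).subtype))).comp
            (DirectSum.decomposeLinearEquiv gW).toLinearMap).flip).comp
          (gV i).subtype)).comp
      (DirectSum.decomposeLinearEquiv gV).toLinearMap)

/-- The degree `n` part of the tensor product grading: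
the span of the homogeneous tensors of total degree `n`. -/
def tensorGrading {V W : Type} [AddCommGroup V] [Module ℚ V] [AddCommGroup W] [Module ℚ W]
    (gV : ℤ → Submodule ℚ V) (gW : ℤ → Submodule ℚ W) (n : ℤ) : Submodule ℚ (V ⊗[ℚ] W) :=
  ⨆ p : {p : ℤ × ℤ // p.1 + p.2 = n},
    LinearMap.range (TensorProduct.map (gV p.1.1).subtype (gW p.1.2).subtype)

/-- `f` is a quasi-isomorphism from the complex `(V, dV)` to the complex `(W, dW)`:
it induces a bijection on homology (`ker d / im d`). -/
def IsQuasiIso {V W : Type} [AddCommGroup V] [Module ℚ V] [AddCommGroup W] [Module ℚ W]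
    (dV : V →ₗ[ℚ] V) (dW : W →ₗ[ℚ] W) (f : V →ₗ[ℚ] W) : Prop :=
  (∀ x : V, dV x = 0 → (∃ y, f x = dW y) → ∃ z, x = dV z) ∧
  (∀ w : W, dW w = 0 → ∃ x, dV x = 0 ∧ ∃ y, w - f x = dW y)

/-- A differential graded algebra over `ℚ`. -/
structure DGAlgebra extends DGVect where
  mul : carrier →ₗ[ℚ] carrier →ₗ[ℚ] carrier
  one : carrier
  one_mem : one ∈ grading 0
  mul_mem : ∀ (i j : ℤ) (x y : carrier), x ∈ grading i → y ∈ grading j →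
    mul x y ∈ grading (i + j)
  mul_assoc' : ∀ x y z : carrier, mul (mul x y) z = mul x (mul y z)
  one_mul' : ∀ x : carrier, mul one x = x
  mul_one' : ∀ x : carrier, mul x one = x
  leibniz : ∀ (i : ℤ) (x y : carrier), x ∈ grading i →
    d (mul x y) = mul (d x) y + ((-1 : ℚ) ^ i) • mul x (d y)

/-- The multiplication of a dg algebra as a map out of the tensor product. -/
def DGAlgebra.mulMap (A : DGAlgebra) : A.carrier ⊗[ℚ] A.carrier →ₗ[ℚ] A.carrier :=
  TensorProduct.lift A.mul

/-- A dg algebra is connective if it is concentrated in non-negative degrees. -/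
def DGAlgebra.Connective (A : DGAlgebra) : Prop := ∀ n : ℤ, n < 0 → A.grading n = ⊥

/-- A (coassociative counital) differential graded coalgebra over `ℚ`,
non-negatively graded. -/
structure DGCoalgebra extends DGVect where
  comul : carrier →ₗ[ℚ] carrier ⊗[ℚ] carrier
  counit : carrier →ₗ[ℚ] ℚ
  nonneg : ∀ n : ℤ, n < 0 → grading n = ⊥
  comul_mem : ∀ (n : ℤ), ∀ x ∈ grading n, comul x ∈ tensorGrading grading grading n
  counit_zero : ∀ (n : ℤ), n ≠ 0 → ∀ x ∈ grading n, counit x = 0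
  coassoc : (TensorProduct.assoc ℚ carrier carrier carrier).toLinearMap.comp
      ((TensorProduct.map comul LinearMap.id).comp comul)
      = (TensorProduct.map LinearMap.id comul).comp comul
  counit_comul_left : (TensorProduct.lid ℚ carrier).toLinearMap.comp
      ((TensorProduct.map counit LinearMap.id).comp comul) = LinearMap.id
  counit_comul_right : (TensorProduct.rid ℚ carrier).toLinearMap.comp
      ((TensorProduct.map LinearMap.id counit).comp comul) = LinearMap.id
  comul_chain : comul.comp d
      = (TensorProduct.map d LinearMap.id + TensorProduct.map (parityOf grading) d).comp comul
  counit_chain : counit.comp d = 0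

/-- Cocommutativity: the comultiplication is invariant under the Koszul signed twist. -/
def DGCoalgebra.Cocomm (C : DGCoalgebra) : Prop :=
  (kSwapOf C.grading C.grading).comp C.comul = C.comul

/-- A coaugmented dg coalgebra: a dg coalgebra with a coaugmentation `η : ℚ → C`,
recorded by the grouplike element `one = η 1` in degree `0`. -/
structure CoaugDGCoalgebra extends DGCoalgebra where
  one : carrier
  one_mem : one ∈ grading 0
  counit_one : counit one = 1
  comul_one : comul one = one ⊗ₜ[ℚ] one

/-- A coaugmented dg coalgebra is 2-reduced if `C₀ = ℚ` (spanned by the coaugmentation)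
and `C₁ = 0`. -/
def CoaugDGCoalgebra.TwoReduced (C : CoaugDGCoalgebra) : Prop :=
  C.grading 0 = Submodule.span ℚ {C.one} ∧ C.grading 1 = ⊥

/-- A twisting chain `τ : C ⇝ A`: a degree `-1` linear map satisfying
`d(τc) = -τ(dc) - (-1)^{|c₍₀₎|} τ(c₍₀₎)·τ(c₍₁₎)`. -/
structure TwistingChain (C : DGCoalgebra) (A : DGAlgebra) where
  toFun : C.carrier →ₗ[ℚ] A.carrier
  mem : ∀ (n : ℤ), ∀ x ∈ C.grading n, toFun x ∈ A.grading (n - 1)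
  twist : A.d.comp toFun + toFun.comp C.d
      + A.mulMap.comp ((TensorProduct.map (toFun.comp (parityOf C.grading)) toFun).comp C.comul)
      = 0

/-- A left dg module over a dg algebra. -/
structure DGModule (A : DGAlgebra) extends DGVect where
  smul : A.carrier →ₗ[ℚ] carrier →ₗ[ℚ] carrier
  smul_mem : ∀ (i j : ℤ) (a : A.carrier) (x : carrier), a ∈ A.grading i → x ∈ grading j →
    smul a x ∈ grading (i + j)
  one_smul' : ∀ x : carrier, smul A.one x = x
  mul_smul' : ∀ (a b : A.carrier) (x : carrier), smul (A.mul a b) x = smul a (smul b x)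
  leibniz : ∀ (i : ℤ) (a : A.carrier) (x : carrier), a ∈ A.grading i →
    d (smul a x) = smul (A.d a) x + ((-1 : ℚ) ^ i) • smul a (d x)

/-- The action of a dg module as a map out of the tensor product. -/
def DGModule.actionMap {A : DGAlgebra} (M : DGModule A) :
    A.carrier ⊗[ℚ] M.carrier →ₗ[ℚ] M.carrier := TensorProduct.lift M.smul

/-- A left dg comodule over a dg coalgebra. -/
structure DGComodule (C : DGCoalgebra) extends DGVect where
  coact : carrier →ₗ[ℚ] C.carrier ⊗[ℚ] carrier
  coact_mem : ∀ (n : ℤ), ∀ x ∈ grading n, coact x ∈ tensorGrading C.grading grading n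
  coassoc : (TensorProduct.assoc ℚ C.carrier C.carrier carrier).toLinearMap.comp
      ((TensorProduct.map C.comul LinearMap.id).comp coact)
      = (TensorProduct.map LinearMap.id coact).comp coact
  counit_coact : (TensorProduct.lid ℚ carrier).toLinearMap.comp
      ((TensorProduct.map C.counit LinearMap.id).comp coact) = LinearMap.id
  coact_chain : coact.comp d
      = (TensorProduct.map C.d LinearMap.id + TensorProduct.map (parityOf C.grading) d).comp coact

/-- Morphisms of dg modules: degree `0` graded chain maps commuting with the action. -/
def IsModuleHom (A : DGAlgebra) (M M' : DGModule A)
    (g : M.carrier →ₗ[ℚ] M'.carrier) : Prop :=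
  (∀ (n : ℤ), ∀ x ∈ M.grading n, g x ∈ M'.grading n) ∧
  g.comp M.d = M'.d.comp g ∧
  g.comp M.actionMap = M'.actionMap.comp (TensorProduct.map LinearMap.id g)

/-- Morphisms of dg comodules: degree `0` graded chain maps commuting with the coaction. -/
def IsComoduleHom (C : DGCoalgebra) (N N' : DGComodule C)
    (f : N.carrier →ₗ[ℚ] N'.carrier) : Prop :=
  (∀ (n : ℤ), ∀ x ∈ N.grading n, f x ∈ N'.grading n) ∧
  f.comp N.d = N'.d.comp f ∧
  (TensorProduct.map LinearMap.id f).comp N.coact = N'.coact.comp f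

/-- The `A`-action on a twisted extension `A ⊗_τ N`: multiplication on the first factor. -/
def extAction (A : DGAlgebra) (N : Type) [AddCommGroup N] [Module ℚ N] :
    A.carrier ⊗[ℚ] (A.carrier ⊗[ℚ] N) →ₗ[ℚ] A.carrier ⊗[ℚ] N :=
  (TensorProduct.map A.mulMap LinearMap.id).comp
    (TensorProduct.assoc ℚ A.carrier A.carrier N).symm.toLinearMap

/-- The differential of the twisted extension `A ⊗_τ N`:
`d(a ⊗ n) = da ⊗ n + (-1)^{|a|} a ⊗ dn - (-1)^{|a|} a·τ(n₍₀₎) ⊗ n₍₁₎`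
for a `C`-comodule `(N, dN, ρ)`. -/
def extDiff (C : DGCoalgebra) (A : DGAlgebra) (τ : TwistingChain C A)
    (N : Type) [AddCommGroup N] [Module ℚ N]
    (dN : N →ₗ[ℚ] N) (ρ : N →ₗ[ℚ] C.carrier ⊗[ℚ] N) :
    A.carrier ⊗[ℚ] N →ₗ[ℚ] A.carrier ⊗[ℚ] N :=
  TensorProduct.map A.d LinearMap.id + TensorProduct.map (parityOf A.grading) dN
    - (TensorProduct.map
        (A.mulMap.comp (TensorProduct.map (parityOf A.grading) τ.toFun)) LinearMap.id).comp
        ((TensorProduct.assoc ℚ A.carrier C.carrier N).symm.toLinearMap.comp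
          (TensorProduct.map LinearMap.id ρ))

/-- The `C`-coaction on a twisted coextension `C ⊗^τ M`, namely `Δ ⊗ id`. -/
def coextCoact (C : DGCoalgebra) (M : Type) [AddCommGroup M] [Module ℚ M] :
    C.carrier ⊗[ℚ] M →ₗ[ℚ] C.carrier ⊗[ℚ] (C.carrier ⊗[ℚ] M) :=
  (TensorProduct.assoc ℚ C.carrier C.carrier M).toLinearMap.comp
    (TensorProduct.map C.comul LinearMap.id)

/-- The differential of the twisted coextension `C ⊗^τ M`, expressed in terms of the map
`tact : C ⊗ M → M`, `c ⊗ m ↦ τ(c)·m`: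
`d(c ⊗ m) = dc ⊗ m + (-1)^{|c|} c ⊗ dm + (-1)^{|c₍₀₎|} c₍₀₎ ⊗ τ(c₍₁₎)·m`. -/
def coextDiffFrom (C : DGCoalgebra) (M : Type) [AddCommGroup M] [Module ℚ M]
    (dM : M →ₗ[ℚ] M) (tact : C.carrier ⊗[ℚ] M →ₗ[ℚ] M) :
    C.carrier ⊗[ℚ] M →ₗ[ℚ] C.carrier ⊗[ℚ] M :=
  TensorProduct.map C.d LinearMap.id + TensorProduct.map (parityOf C.grading) dM
    + (TensorProduct.map (parityOf C.grading) tact).comp (coextCoact C M)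

/-- The differential of the twisted coextension `C ⊗^τ M` of an `A`-module `(M, dM, act)`. -/
def coextDiff (C : DGCoalgebra) (A : DGAlgebra) (τ : TwistingChain C A)
    (M : Type) [AddCommGroup M] [Module ℚ M]
    (dM : M →ₗ[ℚ] M) (act : A.carrier ⊗[ℚ] M →ₗ[ℚ] M) :
    C.carrier ⊗[ℚ] M →ₗ[ℚ] C.carrier ⊗[ℚ] M :=
  coextDiffFrom C M dM (act.comp (TensorProduct.map τ.toFun LinearMap.id))

/-- Morphisms of dg algebras. -/
structure DGAlgebraHom (A B : DGAlgebra) where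
  toLinearMap : A.carrier →ₗ[ℚ] B.carrier
  mem : ∀ (n : ℤ), ∀ x ∈ A.grading n, toLinearMap x ∈ B.grading n
  chain : toLinearMap.comp A.d = B.d.comp toLinearMap
  map_one : toLinearMap A.one = B.one
  map_mul : ∀ x y : A.carrier, toLinearMap (A.mul x y) = B.mul (toLinearMap x) (toLinearMap y)

/-- Data exhibiting a dg algebra as the cobar construction `ΩC` of a coaugmented
dg coalgebra `C`, via the universal twisting chain `t : C ⇝ ΩC`:
dg algebra maps `ΩC → A` correspond bijectively to twisting chains `C ⇝ A`
vanishing on the coaugmentation. -/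
structure CobarData (C : CoaugDGCoalgebra) where
  alg : DGAlgebra
  t : TwistingChain C.toDGCoalgebra alg
  t_one : t.toFun C.one = 0
  univ : ∀ (A : DGAlgebra) (τ : TwistingChain C.toDGCoalgebra A), τ.toFun C.one = 0 →
    ∃! F : DGAlgebraHom alg A, F.toLinearMap.comp t.toFun = τ.toFun

/-- A morphism of `C`-comodules is a `t`-equivalence if the induced morphism of twisted
extensions `ΩC ⊗_t N → ΩC ⊗_t M` is a quasi-isomorphism. -/
def IsTEquiv (C : CoaugDGCoalgebra) (Ω : CobarData C) (N M : DGComodule C.toDGCoalgebra)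
    (f : N.carrier →ₗ[ℚ] M.carrier) : Prop :=
  IsQuasiIso (extDiff C.toDGCoalgebra Ω.alg Ω.t N.carrier N.d N.coact)
    (extDiff C.toDGCoalgebra Ω.alg Ω.t M.carrier M.d M.coact)
    (TensorProduct.map LinearMap.id f)

/-! ## Statement 11: cotensor product of twisted coextensions -/

/-- The differential of the twisted coextension `C ⊗^t A` of an `ΩC`-module `A`. -/
def coextD (C : CoaugDGCoalgebra) (Ω : CobarData C) (A : DGModule Ω.alg) :
    C.carrier ⊗[ℚ] A.carrier →ₗ[ℚ] C.carrier ⊗[ℚ] A.carrier :=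
  coextDiff C.toDGCoalgebra Ω.alg Ω.t A.carrier A.d A.actionMap

/-- The right `C`-coaction on `C ⊗^t A` obtained from the left one via the Koszul
signed twist (for cocommutative `C`): `c ⊗ a ↦ (-1)^{|c₍₁₎||a|} (c₍₀₎ ⊗ a) ⊗ c₍₁₎`. -/
def coextRightCoact (C : CoaugDGCoalgebra) (Ω : CobarData C) (A : DGModule Ω.alg) :
    C.carrier ⊗[ℚ] A.carrier →ₗ[ℚ] (C.carrier ⊗[ℚ] A.carrier) ⊗[ℚ] C.carrier :=
  (TensorProduct.assoc ℚ C.carrier A.carrier C.carrier).symm.toLinearMap.comp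
    ((TensorProduct.map LinearMap.id (kSwapOf C.grading A.grading)).comp
      (coextCoact C.toDGCoalgebra A.carrier))

/-- The two maps whose equaliser is the cotensor product `(C ⊗^t A) □_C (C ⊗^t B)`:
`ρ_M ⊗ id` and `id ⊗ ρ_N` (rearranged to land in `(M ⊗ C) ⊗ N`). -/
def cotensorRel₁ (C : CoaugDGCoalgebra) (Ω : CobarData C) (A B : DGModule Ω.alg) :
    (C.carrier ⊗[ℚ] A.carrier) ⊗[ℚ] (C.carrier ⊗[ℚ] B.carrier) →ₗ[ℚ]
      ((C.carrier ⊗[ℚ] A.carrier) ⊗[ℚ] C.carrier) ⊗[ℚ] (C.carrier ⊗[ℚ] B.carrier) :=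
  TensorProduct.map (coextRightCoact C Ω A)
    (LinearMap.id : C.carrier ⊗[ℚ] B.carrier →ₗ[ℚ] C.carrier ⊗[ℚ] B.carrier)

def cotensorRel₂ (C : CoaugDGCoalgebra) (Ω : CobarData C) (A B : DGModule Ω.alg) :
    (C.carrier ⊗[ℚ] A.carrier) ⊗[ℚ] (C.carrier ⊗[ℚ] B.carrier) →ₗ[ℚ]
      ((C.carrier ⊗[ℚ] A.carrier) ⊗[ℚ] C.carrier) ⊗[ℚ] (C.carrier ⊗[ℚ] B.carrier) :=
  (TensorProduct.assoc ℚ (C.carrier ⊗[ℚ] A.carrier) C.carrier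
      (C.carrier ⊗[ℚ] B.carrier)).symm.toLinearMap.comp
    (TensorProduct.map LinearMap.id (coextCoact C.toDGCoalgebra B.carrier))

/-- The cotensor product `(C ⊗^t A) □_C (C ⊗^t B)`: the equaliser of
`ρ_M ⊗ id` and `id ⊗ ρ_N`. -/
def cotensor (C : CoaugDGCoalgebra) (Ω : CobarData C) (A B : DGModule Ω.alg) :
    Submodule ℚ ((C.carrier ⊗[ℚ] A.carrier) ⊗[ℚ] (C.carrier ⊗[ℚ] B.carrier)) :=
  LinearMap.eqLocus (cotensorRel₁ C Ω A B) (cotensorRel₂ C Ω A B)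

/-- The differential of `(C ⊗^t A) ⊗ (C ⊗^t B)`. -/
def cotDiff (C : CoaugDGCoalgebra) (Ω : CobarData C) (A B : DGModule Ω.alg) :
    (C.carrier ⊗[ℚ] A.carrier) ⊗[ℚ] (C.carrier ⊗[ℚ] B.carrier) →ₗ[ℚ]
      (C.carrier ⊗[ℚ] A.carrier) ⊗[ℚ] (C.carrier ⊗[ℚ] B.carrier) :=
  TensorProduct.map (coextD C Ω A) LinearMap.id
    + TensorProduct.map (TensorProduct.map (parityOf C.grading) (parityOf A.grading))
        (coextD C Ω B)

/-- The action `tc · (a ⊗ b) = (tc·a) ⊗ b + (-1)^{|a|(|c|-1)} a ⊗ (tc·b)` of the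
generators of `ΩC` on `A ⊗ B`, packaged as a map `C ⊗ (A ⊗ B) → A ⊗ B`. -/
def diagTAct (C : CoaugDGCoalgebra) (Ω : CobarData C) (A B : DGModule Ω.alg) :
    C.carrier ⊗[ℚ] (A.carrier ⊗[ℚ] B.carrier) →ₗ[ℚ] A.carrier ⊗[ℚ] B.carrier :=
  (TensorProduct.map (A.actionMap.comp (TensorProduct.map Ω.t.toFun LinearMap.id))
      LinearMap.id).comp
      (TensorProduct.assoc ℚ C.carrier A.carrier B.carrier).symm.toLinearMap
    + (TensorProduct.map (parityOf A.grading)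
        (B.actionMap.comp (TensorProduct.map Ω.t.toFun LinearMap.id))).comp
        ((TensorProduct.assoc ℚ A.carrier C.carrier B.carrier).toLinearMap.comp
          ((TensorProduct.map (kSwapOf C.grading A.grading) LinearMap.id).comp
            (TensorProduct.assoc ℚ C.carrier A.carrier B.carrier).symm.toLinearMap))

/-- The differential of the twisted coextension `C ⊗^t (A ⊗ B)`, where `A ⊗ B` carries
the `ΩC`-action determined on generators by
`tc·(a ⊗ b) = (tc·a) ⊗ b + (-1)^{|a|(|c|-1)} a ⊗ (tc·b)`. -/
def diagCoextD (C : CoaugDGCoalgebra) (Ω : CobarData C) (A B : DGModule Ω.alg) :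
    C.carrier ⊗[ℚ] (A.carrier ⊗[ℚ] B.carrier) →ₗ[ℚ]
      C.carrier ⊗[ℚ] (A.carrier ⊗[ℚ] B.carrier) :=
  coextDiffFrom C.toDGCoalgebra (A.carrier ⊗[ℚ] B.carrier)
    (TensorProduct.map A.d LinearMap.id + TensorProduct.map (parityOf A.grading) B.d)
    (diagTAct C Ω A B)

/-- The `C`-coaction on `(C ⊗^t A) ⊗ (C ⊗^t B)` through the first factor. -/
def cotCoact (C : CoaugDGCoalgebra) (Ω : CobarData C) (A B : DGModule Ω.alg) :
    (C.carrier ⊗[ℚ] A.carrier) ⊗[ℚ] (C.carrier ⊗[ℚ] B.carrier) →ₗ[ℚ]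
      C.carrier ⊗[ℚ] ((C.carrier ⊗[ℚ] A.carrier) ⊗[ℚ] (C.carrier ⊗[ℚ] B.carrier)) :=
  (TensorProduct.assoc ℚ C.carrier (C.carrier ⊗[ℚ] A.carrier)
      (C.carrier ⊗[ℚ] B.carrier)).toLinearMap.comp
    (TensorProduct.map (coextCoact C.toDGCoalgebra A.carrier) LinearMap.id)

/-! ## Auxiliary lemmas -/

section Signs

variable {V W : Type} [AddCommGroup V] [Module ℚ V] [AddCommGroup W] [Module ℚ W]
  (gV : ℤ → Submodule ℚ V) (gW : ℤ → Submodule ℚ W)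
  [DirectSum.Decomposition gV] [DirectSum.Decomposition gW]

lemma signOp_of_mem (k n : ℤ) {x : V} (hx : x ∈ gV n) :
    signOpOf gV k x = ((-1 : ℚ) ^ (k * n)) • x := by
  simp only [signOpOf, LinearMap.comp_apply, LinearEquiv.coe_coe,
    DirectSum.decomposeLinearEquiv_apply]
  rw [DirectSum.decompose_of_mem gV hx]
  erw [DirectSum.toModule_lof]
  simp

lemma kSwap_of_mem (i j : ℤ) {x : V} {y : W} (hx : x ∈ gV i) (hy : y ∈ gW j) :
    kSwapOf gV gW (x ⊗ₜ[ℚ] y) = ((-1 : ℚ) ^ (i * j)) • (y ⊗ₜ[ℚ] x) := by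
  simp only [kSwapOf, TensorProduct.lift.tmul, LinearMap.comp_apply, LinearEquiv.coe_coe,
    DirectSum.decomposeLinearEquiv_apply]
  rw [DirectSum.decompose_of_mem gV hx]
  erw [DirectSum.toModule_lof]
  simp only [LinearMap.comp_apply, LinearMap.flip_apply, LinearEquiv.coe_coe,
    DirectSum.decomposeLinearEquiv_apply]
  rw [DirectSum.decompose_of_mem gW hy]
  erw [DirectSum.toModule_lof]
  simp

lemma hom_ind {p : V → Prop} (h : ∀ n, ∀ x ∈ gV n, p x)
    (hadd : ∀ x y, p x → p y → p (x + y)) (x : V) : p x := by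
  refine DirectSum.Decomposition.inductionOn gV (motive := p) (h 0 0 (Submodule.zero_mem _)) ?_ ?_ x
  · intro i m
    exact h i _ m.2
  · exact fun x y => hadd x y

lemma kSwap_right (j : ℤ) (x : V) {y : W} (hy : y ∈ gW j) :
    kSwapOf gV gW (x ⊗ₜ[ℚ] y) = y ⊗ₜ[ℚ] (signOpOf gV j x) := by
  induction x using hom_ind gV with
  | h n x hx =>
    rw [kSwap_of_mem gV gW n j hx hy, signOp_of_mem gV j n hx, TensorProduct.tmul_smul, mul_comm]
  | hadd x y hx hy => rw [TensorProduct.add_tmul, map_add, hx, hy, map_add, TensorProduct.tmul_add]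

lemma signOp_signOp (k l : ℤ) (x : V) :
    signOpOf gV k (signOpOf gV l x) = signOpOf gV (k + l) x := by
  induction x using hom_ind gV with
  | h n x hx =>
    rw [signOp_of_mem gV l n hx, map_smul, signOp_of_mem gV k n hx, signOp_of_mem gV _ n hx,
      smul_smul, ← zpow_add₀ (by norm_num)]
    congr 2; ring
  | hadd x y hx hy => simp only [map_add, hx, hy]

lemma signOp_congr (k l : ℤ) (h : Even (k - l)) : signOpOf gV k = signOpOf gV l := by
  ext x
  induction x using hom_ind gV with
  | h n x hx =>
    rw [signOp_of_mem gV l n hx, signOp_of_mem gV k n hx]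
    obtain ⟨r, hr⟩ := h
    have : k * n = l * n + 2 * (r * n) := by
      have : k = l + 2 * r := by omega
      subst this; ring
    rw [this, zpow_add₀ (by norm_num), zpow_mul _ 2]
    norm_num
  | hadd x y hx hy => simp only [map_add, hx, hy]

lemma signOp_tensor (k n : ℤ) (z : V ⊗[ℚ] W) (hz : z ∈ tensorGrading gV gW n) :
    TensorProduct.map (signOpOf gV k) (signOpOf gW k) z = ((-1 : ℚ) ^ (k * n)) • z := by
  unfold tensorGrading at hz
  induction hz using Submodule.iSup_induction' with
  | mem p x hx =>
    obtain ⟨w, rfl⟩ := hx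
    obtain ⟨⟨i, j⟩, hp⟩ := p
    simp only at hp w ⊢
    induction w using TensorProduct.induction_on with
    | zero => simp
    | tmul x y =>
      simp only [TensorProduct.map_tmul, Submodule.subtype_apply]
      rw [signOp_of_mem gV k i x.2, signOp_of_mem gW k j y.2, TensorProduct.smul_tmul_smul,
        ← zpow_add₀ (by norm_num), ← hp]
      congr 2; ring
    | add x y hx hy => simp only [map_add, hx, hy, smul_add]
  | zero => simp
  | add x y _ _ hx hy => simp only [map_add, hx, hy, smul_add]

end Signs

lemma signOp_d (V : DGVect) (k : ℤ) (x : V.carrier) :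
    signOpOf V.grading k (V.d x) = ((-1 : ℚ) ^ k) • V.d (signOpOf V.grading k x) := by
  induction x using hom_ind V.grading with
  | h n x hx =>
    rw [signOp_of_mem _ k n hx, signOp_of_mem _ k (n-1) (V.d_mem n x hx), map_smul, smul_smul]
    congr 1
    rw [show k * (n - 1) = k * n - k by ring, zpow_sub₀ (by norm_num), mul_comm, div_eq_mul_inv,
      mul_comm]
    congr 1
    rw [← inv_zpow]; norm_num
  | hadd x y hx hy => simp only [map_add, hx, hy, smul_add]

lemma signOp_comul (C : DGCoalgebra) (k : ℤ) (c : C.carrier) :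
    C.comul (signOpOf C.grading k c)
      = TensorProduct.map (signOpOf C.grading k) (signOpOf C.grading k) (C.comul c) := by
  induction c using hom_ind C.grading with
  | h n x hx =>
    rw [signOp_of_mem _ k n hx, signOp_tensor _ _ k n _ (C.comul_mem n x hx), map_smul]
  | hadd x y hx hy => simp only [map_add, hx, hy]

lemma signOp_counit (C : DGCoalgebra) (k : ℤ) (c : C.carrier) :
    C.counit (signOpOf C.grading k c) = C.counit c := by
  induction c using hom_ind C.grading with
  | h n x hx =>
    rw [signOp_of_mem _ k n hx, map_smul]
    by_cases h : n = 0
    · subst h; simp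
    · rw [C.counit_zero n h x hx]; simp
  | hadd x y hx hy => simp only [map_add, hx, hy]

section Main

variable (C : CoaugDGCoalgebra) (Ω : CobarData C) (A B : DGModule Ω.alg)

/-- The comparison map `c ⊗ a ⊗ b ↦ ± (c₍₀₎ ⊗ a) ⊗ (c₍₁₎ ⊗ b)`. -/
def phi : C.carrier ⊗[ℚ] (A.carrier ⊗[ℚ] B.carrier) →ₗ[ℚ]
    (C.carrier ⊗[ℚ] A.carrier) ⊗[ℚ] (C.carrier ⊗[ℚ] B.carrier) :=
  (TensorProduct.assoc ℚ (C.carrier ⊗[ℚ] A.carrier) C.carrier B.carrier).toLinearMap.comp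
    ((TensorProduct.map (coextRightCoact C Ω A) LinearMap.id).comp
      (TensorProduct.assoc ℚ C.carrier A.carrier B.carrier).symm.toLinearMap)

/-- The inverse `(c ⊗ a) ⊗ (c' ⊗ b) ↦ ε(c') c ⊗ a ⊗ b`. -/
def psi : (C.carrier ⊗[ℚ] A.carrier) ⊗[ℚ] (C.carrier ⊗[ℚ] B.carrier) →ₗ[ℚ]
    C.carrier ⊗[ℚ] (A.carrier ⊗[ℚ] B.carrier) :=
  (TensorProduct.assoc ℚ C.carrier A.carrier B.carrier).toLinearMap.comp
    (TensorProduct.map LinearMap.id ((TensorProduct.lid ℚ B.carrier).toLinearMap.comp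
      (TensorProduct.map C.counit LinearMap.id)))

/-- `x ⊗ y ↦ (x ⊗ a) ⊗ (y ⊗ b)`. -/
def insAB {C A B : Type} [AddCommGroup C] [Module ℚ C] [AddCommGroup A] [Module ℚ A]
    [AddCommGroup B] [Module ℚ B] (a : A) (b : B) :
    C ⊗[ℚ] C →ₗ[ℚ] (C ⊗[ℚ] A) ⊗[ℚ] (C ⊗[ℚ] B) :=
  TensorProduct.map ((TensorProduct.mk ℚ C A).flip a) ((TensorProduct.mk ℚ C B).flip b)

@[simp] lemma insAB_tmul {C A B : Type} [AddCommGroup C] [Module ℚ C] [AddCommGroup A]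
    [Module ℚ A] [AddCommGroup B] [Module ℚ B] (a : A) (b : B) (x y : C) :
    insAB a b (x ⊗ₜ[ℚ] y) = (x ⊗ₜ[ℚ] a) ⊗ₜ[ℚ] (y ⊗ₜ[ℚ] b) := rfl

/-- `signs` in degree `k` on `C`. -/
abbrev sg (k : ℤ) : C.carrier →ₗ[ℚ] C.carrier := signOpOf C.grading k

lemma rightCoact_of_mem (c : C.carrier) (j : ℤ) {a : A.carrier} (ha : a ∈ A.grading j) :
    coextRightCoact C Ω A (c ⊗ₜ[ℚ] a)
      = TensorProduct.map ((TensorProduct.mk ℚ C.carrier A.carrier).flip a) (sg C j)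
          (C.comul c) := by
  simp only [coextRightCoact, coextCoact, LinearMap.comp_apply, TensorProduct.map_tmul,
    LinearMap.id_apply, LinearEquiv.coe_coe]
  generalize C.comul c = z
  induction z using TensorProduct.induction_on with
  | zero => simp
  | tmul x y => simp [kSwap_right C.grading A.grading j y ha]
  | add x y hx hy => simp only [TensorProduct.add_tmul, map_add, hx, hy]

lemma phi_of_mem (c : C.carrier) (j : ℤ) {a : A.carrier} (ha : a ∈ A.grading j) (b : B.carrier) :
    phi C Ω A B (c ⊗ₜ[ℚ] (a ⊗ₜ[ℚ] b))
      = insAB a b (TensorProduct.map LinearMap.id (sg C j) (C.comul c)) := by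
  simp only [phi, LinearMap.comp_apply, LinearEquiv.coe_coe, TensorProduct.assoc_symm_tmul,
    TensorProduct.map_tmul, LinearMap.id_apply, rightCoact_of_mem C Ω A c j ha]
  generalize C.comul c = z
  induction z using TensorProduct.induction_on with
  | zero => simp
  | tmul x y => simp
  | add x y hx hy => simp only [TensorProduct.add_tmul, map_add, hx, hy]

/-- Linear maps on `C ⊗ (A ⊗ B)` agree if they do so for homogeneous `a`. -/
lemma ext_hom {T : Type} [AddCommMonoid T] [Module ℚ T]
    {f g : C.carrier ⊗[ℚ] (A.carrier ⊗[ℚ] B.carrier) →ₗ[ℚ] T}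
    (h : ∀ (j : ℤ) (c : C.carrier) (a : A.carrier) (b : B.carrier), a ∈ A.grading j →
      f (c ⊗ₜ[ℚ] (a ⊗ₜ[ℚ] b)) = g (c ⊗ₜ[ℚ] (a ⊗ₜ[ℚ] b))) : f = g := by
  refine TensorProduct.ext' fun c w => ?_
  induction w using TensorProduct.induction_on with
  | zero => simp
  | tmul a b =>
    induction a using hom_ind A.grading with
    | h n x hx => exact h n c x b hx
    | hadd x y hx hy => simp only [TensorProduct.add_tmul, TensorProduct.tmul_add, map_add, hx, hy]
  | add x y hx hy => simp only [TensorProduct.tmul_add, map_add, hx, hy]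

lemma coassoc_apply (c : C.carrier) :
    TensorProduct.assoc ℚ C.carrier C.carrier C.carrier
      (TensorProduct.map C.comul LinearMap.id (C.comul c))
      = TensorProduct.map LinearMap.id C.comul (C.comul c) :=
  LinearMap.congr_fun C.coassoc c

lemma counit_right_apply (c : C.carrier) :
    TensorProduct.rid ℚ C.carrier (TensorProduct.map LinearMap.id C.counit (C.comul c)) = c :=
  LinearMap.congr_fun C.counit_comul_right c

lemma psi_phi : (psi C Ω A B).comp (phi C Ω A B) = LinearMap.id := by
  refine ext_hom C Ω A B fun j c a b ha => ?_
  rw [LinearMap.comp_apply, phi_of_mem C Ω A B c j ha, LinearMap.id_apply]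
  conv_rhs => rw [← counit_right_apply C c]
  generalize C.comul c = z
  induction z using TensorProduct.induction_on with
  | zero => simp
  | tmul x y =>
    simp [psi, signOp_counit C.toDGCoalgebra, TensorProduct.smul_tmul']
  | add x y hx hy => simp only [TensorProduct.add_tmul, map_add, hx, hy]

/-- Apply the counit to the last copy of `C`. -/
def retr : ((C.carrier ⊗[ℚ] A.carrier) ⊗[ℚ] C.carrier) ⊗[ℚ] (C.carrier ⊗[ℚ] B.carrier) →ₗ[ℚ]
      (C.carrier ⊗[ℚ] A.carrier) ⊗[ℚ] (C.carrier ⊗[ℚ] B.carrier) :=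
  (TensorProduct.assoc ℚ (C.carrier ⊗[ℚ] A.carrier) C.carrier B.carrier).toLinearMap.comp
    (TensorProduct.map LinearMap.id ((TensorProduct.lid ℚ B.carrier).toLinearMap.comp
      (TensorProduct.map C.counit LinearMap.id)))

lemma retr_rel₂ : (retr C Ω A B).comp (cotensorRel₂ C Ω A B) = LinearMap.id := by
  refine TensorProduct.ext_fourfold' fun x a c b => ?_
  simp only [cotensorRel₂, coextCoact, LinearMap.comp_apply, TensorProduct.map_tmul,
    LinearMap.id_apply, LinearEquiv.coe_coe]
  conv_rhs => rw [← counit_right_apply C c]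
  generalize C.comul c = z
  induction z using TensorProduct.induction_on with
  | zero => simp
  | tmul x y => simp [retr, ← TensorProduct.smul_tmul', TensorProduct.tmul_smul]
  | add x y hx hy => simp only [TensorProduct.add_tmul, TensorProduct.tmul_add, map_add, hx, hy]

lemma retr_rel₁ : (retr C Ω A B).comp (cotensorRel₁ C Ω A B)
    = (phi C Ω A B).comp (psi C Ω A B) := by
  refine TensorProduct.ext_fourfold' fun x a c b => ?_
  simp [cotensorRel₁, retr, phi, psi]

lemma phi_psi_mem (x : (C.carrier ⊗[ℚ] A.carrier) ⊗[ℚ] (C.carrier ⊗[ℚ] B.carrier))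
    (hx : x ∈ cotensor C Ω A B) : phi C Ω A B (psi C Ω A B x) = x := by
  have h1 := LinearMap.congr_fun (retr_rel₁ C Ω A B) x
  have h2 : retr C Ω A B (cotensorRel₂ C Ω A B x) = x :=
    LinearMap.congr_fun (retr_rel₂ C Ω A B) x
  have h3 : cotensorRel₁ C Ω A B x = cotensorRel₂ C Ω A B x := hx
  simp only [LinearMap.comp_apply] at h1
  rw [← h1, h3, h2]

lemma rel_phi : (cotensorRel₁ C Ω A B).comp (phi C Ω A B)
    = (cotensorRel₂ C Ω A B).comp (phi C Ω A B) := by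
  apply ext_hom C Ω A B
  intro j c a b ha
  simp only [LinearMap.comp_apply]
  rw [phi_of_mem C Ω A B c j ha]
  let K : C.carrier ⊗[ℚ] (C.carrier ⊗[ℚ] C.carrier) →ₗ[ℚ]
      ((C.carrier ⊗[ℚ] A.carrier) ⊗[ℚ] C.carrier) ⊗[ℚ] (C.carrier ⊗[ℚ] B.carrier) :=
    (TensorProduct.map (TensorProduct.map ((TensorProduct.mk ℚ C.carrier A.carrier).flip a)
      (sg C j)) (((TensorProduct.mk ℚ C.carrier B.carrier).flip b).comp (sg C j))).comp
      (TensorProduct.assoc ℚ C.carrier C.carrier C.carrier).symm.toLinearMap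
  have h1 : ∀ z : C.carrier ⊗[ℚ] C.carrier,
      cotensorRel₁ C Ω A B (insAB a b (TensorProduct.map LinearMap.id (sg C j) z))
        = K (TensorProduct.assoc ℚ C.carrier C.carrier C.carrier
            (TensorProduct.map C.comul LinearMap.id z)) := by
    intro z
    induction z using TensorProduct.induction_on with
    | zero => simp
    | tmul x y => simp [K, cotensorRel₁, rightCoact_of_mem C Ω A x j ha]
    | add x y hx hy => simp only [map_add, hx, hy]
  have h2 : ∀ z : C.carrier ⊗[ℚ] C.carrier,
      cotensorRel₂ C Ω A B (insAB a b (TensorProduct.map LinearMap.id (sg C j) z))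
        = K (TensorProduct.map LinearMap.id C.comul z) := by
    intro z
    induction z using TensorProduct.induction_on with
    | zero => simp
    | tmul x y =>
      simp only [cotensorRel₂, coextCoact, TensorProduct.map_tmul, insAB_tmul, LinearMap.id_apply,
        LinearMap.comp_apply, signOp_comul, LinearEquiv.coe_coe]
      generalize C.comul y = w
      induction w using TensorProduct.induction_on with
      | zero => simp
      | tmul u v => simp [K]
      | add x y hx hy =>
        simp only [TensorProduct.add_tmul, TensorProduct.tmul_add, map_add, hx, hy]
    | add x y hx hy => simp only [map_add, hx, hy]
  rw [h1, h2, coassoc_apply]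

lemma phi_mem (x : C.carrier ⊗[ℚ] (A.carrier ⊗[ℚ] B.carrier)) : phi C Ω A B x ∈ cotensor C Ω A B :=
  LinearMap.congr_fun (rel_phi C Ω A B) x

/-- The isomorphism. -/
def cotEquiv : ↥(cotensor C Ω A B) ≃ₗ[ℚ] (C.carrier ⊗[ℚ] (A.carrier ⊗[ℚ] B.carrier)) :=
  LinearEquiv.ofLinearMap ((psi C Ω A B).comp (cotensor C Ω A B).subtype)
    ((phi C Ω A B).codRestrict (cotensor C Ω A B) (phi_mem C Ω A B))
    (by
      refine LinearMap.ext fun x => ?_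
      exact LinearMap.congr_fun (psi_phi C Ω A B) x)
    (by
      refine LinearMap.ext fun x => Subtype.ext ?_
      exact phi_psi_mem C Ω A B x.1 x.2)

lemma phi_cotEquiv (x : cotensor C Ω A B) : phi C Ω A B (cotEquiv C Ω A B x) = x :=
  phi_psi_mem C Ω A B x.1 x.2

lemma cotEquiv_phi (y) (h) : cotEquiv C Ω A B ⟨phi C Ω A B y, h⟩ = y :=
  LinearMap.congr_fun (psi_phi C Ω A B) y

lemma phi_injective : Function.Injective (phi C Ω A B) :=
  Function.LeftInverse.injective (g := psi C Ω A B) (LinearMap.congr_fun (psi_phi C Ω A B))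

/-- The coaction is compatible with `phi`. -/
lemma phi_coact : (TensorProduct.map LinearMap.id (phi C Ω A B)).comp
      (coextCoact C.toDGCoalgebra (A.carrier ⊗[ℚ] B.carrier))
    = (cotCoact C Ω A B).comp (phi C Ω A B) := by
  refine ext_hom C Ω A B fun j c a b ha => ?_
  simp only [LinearMap.comp_apply]
  rw [phi_of_mem C Ω A B c j ha]
  let K : C.carrier ⊗[ℚ] (C.carrier ⊗[ℚ] C.carrier) →ₗ[ℚ]
      C.carrier ⊗[ℚ] ((C.carrier ⊗[ℚ] A.carrier) ⊗[ℚ] (C.carrier ⊗[ℚ] B.carrier)) :=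
    TensorProduct.map LinearMap.id
      ((insAB a b).comp (TensorProduct.map LinearMap.id (sg C j)))
  have h1 : ∀ z : C.carrier ⊗[ℚ] C.carrier,
      TensorProduct.map LinearMap.id (phi C Ω A B)
        (TensorProduct.assoc ℚ C.carrier C.carrier _ (z ⊗ₜ[ℚ] (a ⊗ₜ[ℚ] b)))
        = K (TensorProduct.map LinearMap.id C.comul z) := by
    intro z
    induction z using TensorProduct.induction_on with
    | zero => simp
    | tmul x y => simp [K, phi_of_mem C Ω A B y j ha]
    | add x y hx hy => simp only [map_add, TensorProduct.add_tmul, hx, hy]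
  have h2 : ∀ z : C.carrier ⊗[ℚ] C.carrier,
      cotCoact C Ω A B (insAB a b (TensorProduct.map LinearMap.id (sg C j) z))
        = K (TensorProduct.assoc ℚ C.carrier C.carrier C.carrier
            (TensorProduct.map C.comul LinearMap.id z)) := by
    intro z
    induction z using TensorProduct.induction_on with
    | zero => simp
    | tmul x y =>
      simp only [cotCoact, coextCoact, TensorProduct.map_tmul, insAB_tmul, LinearMap.id_apply,
        LinearMap.comp_apply, LinearEquiv.coe_coe]
      generalize C.comul x = w
      induction w using TensorProduct.induction_on with
      | zero => simp
      | tmul u v => simp [K]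
      | add x y hx hy =>
        simp only [TensorProduct.add_tmul, map_add, hx, hy]
    | add x y hx hy => simp only [map_add, hx, hy]
  rw [h2, coassoc_apply, ← h1]
  simp [coextCoact]

lemma map_assoc_ins {M T : Type} [AddCommGroup M] [Module ℚ M] [AddCommGroup T] [Module ℚ T]
    (P : C.carrier →ₗ[ℚ] C.carrier) (f : C.carrier ⊗[ℚ] M →ₗ[ℚ] T) (m : M)
    (z : C.carrier ⊗[ℚ] C.carrier) :
    TensorProduct.map P f (TensorProduct.assoc ℚ C.carrier C.carrier M (z ⊗ₜ[ℚ] m))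
      = TensorProduct.map P (f.comp ((TensorProduct.mk ℚ C.carrier M).flip m)) z := by
  induction z using TensorProduct.induction_on with
  | zero => simp
  | tmul x y => simp
  | add x y hx hy => simp only [TensorProduct.add_tmul, map_add, hx, hy]

/-- The action of `t c` on a fixed element. -/
def tAt (a : A.carrier) : C.carrier →ₗ[ℚ] A.carrier := (A.smul.flip a).comp Ω.t.toFun

lemma coextD_tmul (c : C.carrier) (a : A.carrier) :
    coextD C Ω A (c ⊗ₜ[ℚ] a) = C.d c ⊗ₜ[ℚ] a + sg C 1 c ⊗ₜ[ℚ] A.d a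
      + TensorProduct.map (sg C 1) (tAt C Ω A a) (C.comul c) := by
  simp only [coextD, coextDiff, coextDiffFrom, coextCoact, LinearMap.add_apply,
    LinearMap.comp_apply, TensorProduct.map_tmul, LinearMap.id_apply, LinearEquiv.coe_coe]
  rw [map_assoc_ins]
  rfl

lemma diagTAct_of_mem (c : C.carrier) (j : ℤ) {a : A.carrier} (ha : a ∈ A.grading j)
    (b : B.carrier) :
    diagTAct C Ω A B (c ⊗ₜ[ℚ] (a ⊗ₜ[ℚ] b)) = tAt C Ω A a c ⊗ₜ[ℚ] b
      + ((-1 : ℚ) ^ j) • (a ⊗ₜ[ℚ] tAt C Ω B b (sg C j c)) := by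
  simp [diagTAct, tAt, DGModule.actionMap, kSwap_right C.grading A.grading j c ha, parityOf,
    signOp_of_mem A.grading 1 j ha, TensorProduct.smul_tmul']

lemma diagCoextD_of_mem (c : C.carrier) (j : ℤ) {a : A.carrier} (ha : a ∈ A.grading j)
    (b : B.carrier) :
    diagCoextD C Ω A B (c ⊗ₜ[ℚ] (a ⊗ₜ[ℚ] b))
      = C.d c ⊗ₜ[ℚ] (a ⊗ₜ[ℚ] b) + sg C 1 c ⊗ₜ[ℚ] (A.d a ⊗ₜ[ℚ] b)
      + ((-1 : ℚ) ^ j) • sg C 1 c ⊗ₜ[ℚ] (a ⊗ₜ[ℚ] B.d b)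
      + TensorProduct.map (sg C 1)
          (((TensorProduct.mk ℚ A.carrier B.carrier).flip b).comp (tAt C Ω A a)) (C.comul c)
      + ((-1 : ℚ) ^ j) • TensorProduct.map (sg C 1)
          ((TensorProduct.mk ℚ A.carrier B.carrier a).comp ((tAt C Ω B b).comp (sg C j)))
          (C.comul c) := by
  have hT : (diagTAct C Ω A B).comp
      ((TensorProduct.mk ℚ C.carrier (A.carrier ⊗[ℚ] B.carrier)).flip (a ⊗ₜ[ℚ] b))
      = ((TensorProduct.mk ℚ A.carrier B.carrier).flip b).comp (tAt C Ω A a)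
        + ((-1 : ℚ) ^ j) •
          ((TensorProduct.mk ℚ A.carrier B.carrier a).comp ((tAt C Ω B b).comp (sg C j))) := by
    refine LinearMap.ext fun x => ?_
    simp [diagTAct_of_mem C Ω A B x j ha]
  simp only [diagCoextD, coextDiffFrom, coextCoact, LinearMap.add_apply,
    LinearMap.comp_apply, TensorProduct.map_tmul, LinearMap.id_apply, LinearEquiv.coe_coe]
  rw [map_assoc_ins, hT, TensorProduct.map_add_right, TensorProduct.map_smul_right]
  simp only [parityOf, signOp_of_mem A.grading 1 j ha, TensorProduct.tmul_add,
    LinearMap.add_apply, LinearMap.smul_apply, one_mul, ← TensorProduct.smul_tmul',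
    TensorProduct.tmul_smul]
  abel

lemma sg_sg (k l m : ℤ) (h : Even (k + l - m)) (x : C.carrier) :
    sg C k (sg C l x) = sg C m x := by
  rw [signOp_signOp, signOp_congr C.grading (k + l) m h]

/-- First part: internal differential of `C`. -/
lemma chain₁ (c : C.carrier) (j : ℤ) {a : A.carrier} (ha : a ∈ A.grading j) (b : B.carrier) :
    phi C Ω A B (C.d c ⊗ₜ[ℚ] (a ⊗ₜ[ℚ] b))
      = insAB a b (TensorProduct.map C.d (sg C j) (C.comul c))
        + ((-1 : ℚ) ^ j) • insAB a b (TensorProduct.map (sg C 1) (C.d.comp (sg C j))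
            (C.comul c)) := by
  rw [phi_of_mem C Ω A B _ j ha]
  have := LinearMap.congr_fun C.comul_chain c
  simp only [LinearMap.comp_apply] at this
  rw [this]
  generalize C.comul c = z
  induction z using TensorProduct.induction_on with
  | zero => simp
  | tmul x y =>
    simp only [LinearMap.add_apply, TensorProduct.map_tmul, map_add, LinearMap.id_apply,
      LinearMap.comp_apply, insAB_tmul, sg, signOp_d, parityOf, TensorProduct.tmul_smul,
      map_smul]
  | add x y hx hy => simp only [map_add, smul_add, hx, hy]; abel

/-- Second part: internal differential of `A`. -/
lemma chain₂ (c : C.carrier) (j : ℤ) {a : A.carrier} (ha : a ∈ A.grading j) (b : B.carrier) :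
    phi C Ω A B (sg C 1 c ⊗ₜ[ℚ] (A.d a ⊗ₜ[ℚ] b))
      = insAB (A.d a) b (TensorProduct.map (sg C 1) (sg C j) (C.comul c)) := by
  rw [phi_of_mem C Ω A B _ (j - 1) (A.d_mem j a ha), signOp_comul]
  generalize C.comul c = z
  induction z using TensorProduct.induction_on with
  | zero => simp
  | tmul x y =>
    simp only [TensorProduct.map_tmul, LinearMap.id_apply]
    rw [sg_sg C (j - 1) 1 j (by simp)]
  | add x y hx hy => simp only [map_add, hx, hy]

/-- Third part: internal differential of `B`. -/
lemma chain₃ (c : C.carrier) (j : ℤ) {a : A.carrier} (ha : a ∈ A.grading j) (b : B.carrier) :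
    phi C Ω A B (sg C 1 c ⊗ₜ[ℚ] (a ⊗ₜ[ℚ] b))
      = insAB a b (TensorProduct.map (sg C 1) ((sg C 1).comp (sg C j)) (C.comul c)) := by
  rw [phi_of_mem C Ω A B _ j ha, signOp_comul]
  generalize C.comul c = z
  induction z using TensorProduct.induction_on with
  | zero => simp
  | tmul x y =>
    simp only [TensorProduct.map_tmul, LinearMap.id_apply, LinearMap.comp_apply]
    rw [sg_sg C j 1 (j + 1) (by simp), sg_sg C 1 j (j + 1) (by simp [add_comm])]
  | add x y hx hy => simp only [map_add, hx, hy]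

/-- Fourth part: twisting on `A`. -/
lemma chain₄ (hcc : C.toDGCoalgebra.Cocomm) (c : C.carrier) (j : ℤ) {a : A.carrier}
    (ha : a ∈ A.grading j) (b : B.carrier) :
    phi C Ω A B (TensorProduct.map (sg C 1)
          (((TensorProduct.mk ℚ A.carrier B.carrier).flip b).comp (tAt C Ω A a)) (C.comul c))
      = TensorProduct.map ((TensorProduct.map (sg C 1) (tAt C Ω A a)).comp C.comul)
          (((TensorProduct.mk ℚ C.carrier B.carrier).flip b).comp (sg C j)) (C.comul c) := by
  let K : C.carrier ⊗[ℚ] (C.carrier ⊗[ℚ] C.carrier) →ₗ[ℚ]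
      (C.carrier ⊗[ℚ] A.carrier) ⊗[ℚ] (C.carrier ⊗[ℚ] B.carrier) :=
    (TensorProduct.map (TensorProduct.map (sg C 1) (tAt C Ω A a))
      (((TensorProduct.mk ℚ C.carrier B.carrier).flip b).comp (sg C j))).comp
      (TensorProduct.assoc ℚ C.carrier C.carrier C.carrier).symm.toLinearMap
  have h1 : ∀ z : C.carrier ⊗[ℚ] C.carrier,
      phi C Ω A B (TensorProduct.map (sg C 1)
          (((TensorProduct.mk ℚ A.carrier B.carrier).flip b).comp (tAt C Ω A a)) z)
      = K (TensorProduct.map LinearMap.id (kSwapOf C.grading C.grading)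
          (TensorProduct.assoc ℚ C.carrier C.carrier C.carrier
            (TensorProduct.map C.comul LinearMap.id z))) := by
    intro z
    induction z using TensorProduct.induction_on with
    | zero => simp
    | tmul x y =>
      induction y using hom_ind C.grading with
      | h n y hy =>
        have hm : tAt C Ω A a y ∈ A.grading (n - 1 + j) :=
          A.smul_mem _ _ _ _ (Ω.t.mem n y hy) ha
        simp only [TensorProduct.map_tmul, LinearMap.comp_apply, LinearMap.flip_apply,
          TensorProduct.mk_apply, LinearMap.id_apply]
        rw [phi_of_mem C Ω A B _ _ hm, signOp_comul]
        generalize C.comul x = w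
        induction w using TensorProduct.induction_on with
        | zero => simp
        | tmul u v =>
          simp only [TensorProduct.map_tmul, LinearMap.id_apply, TensorProduct.assoc_tmul,
            kSwap_right C.grading C.grading n v hy]
          rw [sg_sg C (n - 1 + j) 1 (j + n) (by ring_nf; simp)]
          simp [K, sg_sg C j n (j + n) (by simp)]
        | add x y hx hy => simp only [TensorProduct.add_tmul, map_add, hx, hy]
      | hadd x y hx hy => simp only [TensorProduct.tmul_add, map_add, hx, hy]
    | add x y hx hy => simp only [map_add, hx, hy]
  have h2 : ∀ z : C.carrier ⊗[ℚ] C.carrier,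
      TensorProduct.map ((TensorProduct.map (sg C 1) (tAt C Ω A a)).comp C.comul)
          (((TensorProduct.mk ℚ C.carrier B.carrier).flip b).comp (sg C j)) z
      = K (TensorProduct.assoc ℚ C.carrier C.carrier C.carrier
            (TensorProduct.map C.comul LinearMap.id z)) := by
    intro z
    induction z using TensorProduct.induction_on with
    | zero => simp
    | tmul x y => simp [K]
    | add x y hx hy => simp only [map_add, hx, hy]
  rw [h1, h2, coassoc_apply]
  congr 1
  rw [← LinearMap.comp_apply, ← TensorProduct.map_comp, hcc, LinearMap.id_comp]

/-- Fifth part: twisting on `B`. -/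
lemma chain₅ (c : C.carrier) (j : ℤ) {a : A.carrier}
    (ha : a ∈ A.grading j) (b : B.carrier) :
    phi C Ω A B (TensorProduct.map (sg C 1)
          ((TensorProduct.mk ℚ A.carrier B.carrier a).comp ((tAt C Ω B b).comp (sg C j)))
          (C.comul c))
      = TensorProduct.map (((TensorProduct.mk ℚ C.carrier A.carrier).flip a).comp (sg C 1))
          ((TensorProduct.map (sg C 1) (tAt C Ω B b)).comp (C.comul.comp (sg C j)))
          (C.comul c) := by
  let K : C.carrier ⊗[ℚ] (C.carrier ⊗[ℚ] C.carrier) →ₗ[ℚ]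
      (C.carrier ⊗[ℚ] A.carrier) ⊗[ℚ] (C.carrier ⊗[ℚ] B.carrier) :=
    TensorProduct.map (((TensorProduct.mk ℚ C.carrier A.carrier).flip a).comp (sg C 1))
      (TensorProduct.map (sg C (j + 1)) ((tAt C Ω B b).comp (sg C j)))
  have h1 : ∀ z : C.carrier ⊗[ℚ] C.carrier,
      phi C Ω A B (TensorProduct.map (sg C 1)
          ((TensorProduct.mk ℚ A.carrier B.carrier a).comp ((tAt C Ω B b).comp (sg C j))) z)
      = K (TensorProduct.assoc ℚ C.carrier C.carrier C.carrier
            (TensorProduct.map C.comul LinearMap.id z)) := by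
    intro z
    induction z using TensorProduct.induction_on with
    | zero => simp
    | tmul x y =>
      simp only [TensorProduct.map_tmul, LinearMap.comp_apply,
        TensorProduct.mk_apply, LinearMap.id_apply]
      rw [phi_of_mem C Ω A B _ _ ha, signOp_comul]
      generalize C.comul x = w
      induction w using TensorProduct.induction_on with
      | zero => simp
      | tmul u v =>
        simp only [TensorProduct.map_tmul, LinearMap.id_apply, TensorProduct.assoc_tmul]
        rw [sg_sg C j 1 (j + 1) (by simp)]
        simp [K]
      | add x y hx hy => simp only [TensorProduct.add_tmul, map_add, hx, hy]
    | add x y hx hy => simp only [map_add, hx, hy]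
  have h2 : ∀ z : C.carrier ⊗[ℚ] C.carrier,
      TensorProduct.map (((TensorProduct.mk ℚ C.carrier A.carrier).flip a).comp (sg C 1))
          ((TensorProduct.map (sg C 1) (tAt C Ω B b)).comp (C.comul.comp (sg C j))) z
      = K (TensorProduct.map LinearMap.id C.comul z) := by
    intro z
    induction z using TensorProduct.induction_on with
    | zero => simp
    | tmul x y =>
      simp only [TensorProduct.map_tmul, LinearMap.comp_apply, LinearMap.id_apply,
        signOp_comul, K]
      congr 1
      generalize C.comul y = w
      induction w using TensorProduct.induction_on with
      | zero => simp
      | tmul u v =>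
        simp only [TensorProduct.map_tmul, LinearMap.comp_apply]
        rw [sg_sg C 1 j (j + 1) (by simp [add_comm])]
      | add x y hx hy => simp only [map_add, hx, hy]
    | add x y hx hy => simp only [map_add, hx, hy]
  rw [h1, h2, coassoc_apply]

lemma cotDiff_ins (j : ℤ) {a : A.carrier} (ha : a ∈ A.grading j) (b : B.carrier)
    (z : C.carrier ⊗[ℚ] C.carrier) :
    cotDiff C Ω A B (insAB a b (TensorProduct.map LinearMap.id (sg C j) z))
      = insAB a b (TensorProduct.map C.d (sg C j) z)
        + insAB (A.d a) b (TensorProduct.map (sg C 1) (sg C j) z)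
        + TensorProduct.map ((TensorProduct.map (sg C 1) (tAt C Ω A a)).comp C.comul)
          (((TensorProduct.mk ℚ C.carrier B.carrier).flip b).comp (sg C j)) z
        + ((-1 : ℚ) ^ j) • insAB a b (TensorProduct.map (sg C 1) (C.d.comp (sg C j)) z)
        + ((-1 : ℚ) ^ j) •
            insAB a (B.d b) (TensorProduct.map (sg C 1) ((sg C 1).comp (sg C j)) z)
        + ((-1 : ℚ) ^ j) •
          TensorProduct.map (((TensorProduct.mk ℚ C.carrier A.carrier).flip a).comp (sg C 1))
          ((TensorProduct.map (sg C 1) (tAt C Ω B b)).comp (C.comul.comp (sg C j))) z := by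
  induction z using TensorProduct.induction_on with
  | zero => simp
  | tmul x y =>
    simp only [cotDiff, LinearMap.add_apply, TensorProduct.map_tmul, LinearMap.id_apply,
      insAB_tmul, coextD_tmul, parityOf, signOp_of_mem A.grading 1 j ha, one_mul,
      TensorProduct.tmul_add, TensorProduct.add_tmul, TensorProduct.tmul_smul,
      ← TensorProduct.smul_tmul', LinearMap.comp_apply, LinearMap.flip_apply,
      TensorProduct.mk_apply, smul_add]
    abel
  | add x y hx hy => simp only [map_add, smul_add, hx, hy]; abel

lemma phi_chain (hcc : C.toDGCoalgebra.Cocomm) :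
    (phi C Ω A B).comp (diagCoextD C Ω A B) = (cotDiff C Ω A B).comp (phi C Ω A B) := by
  refine ext_hom C Ω A B fun j c a b ha => ?_
  simp only [LinearMap.comp_apply]
  rw [phi_of_mem C Ω A B c j ha, cotDiff_ins C Ω A B j ha, diagCoextD_of_mem C Ω A B c j ha]
  simp only [map_add, map_smul]
  rw [chain₁ C Ω A B c j ha, chain₂ C Ω A B c j ha, chain₃ C Ω A B c j ha,
    chain₄ C Ω A B hcc c j ha, chain₅ C Ω A B c j ha]
  abel

lemma phi_natural (A' B' : DGModule Ω.alg) (f : A.carrier →ₗ[ℚ] A'.carrier)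
    (g : B.carrier →ₗ[ℚ] B'.carrier) (hf : ∀ (n : ℤ), ∀ x ∈ A.grading n, f x ∈ A'.grading n) :
    (phi C Ω A' B').comp (TensorProduct.map LinearMap.id (TensorProduct.map f g))
      = (TensorProduct.map (TensorProduct.map LinearMap.id f)
              (TensorProduct.map LinearMap.id g)).comp (phi C Ω A B) := by
  refine ext_hom C Ω A B fun j c a b ha => ?_
  simp only [LinearMap.comp_apply, TensorProduct.map_tmul, LinearMap.id_apply]
  rw [phi_of_mem C Ω A B c j ha, phi_of_mem C Ω A' B' c j (hf j a ha)]
  generalize C.comul c = z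
  induction z using TensorProduct.induction_on with
  | zero => simp
  | tmul x y => simp
  | add x y hx hy => simp only [map_add, hx, hy]

end Main

/-- For a 2-reduced cocommutative dg coalgebra `C` and left dg
`ΩC`-modules `A`, `B`, there is an isomorphism of `C`-comodules, natural in `A` and `B`,
`(C ⊗^t A) □_C (C ⊗^t B) ≅ C ⊗^t (A ⊗ B)`, where `A ⊗ B` carries the `ΩC`-action
determined on generators by `tc·(a ⊗ b) = (tc·a) ⊗ b + (-1)^{|a|(|c|-1)} a ⊗ (tc·b)`. -/
theorem cotensor_of_twisted_coextensions (C : CoaugDGCoalgebra) (hred : C.TwoReduced)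
    (hcc : C.toDGCoalgebra.Cocomm) (Ω : CobarData C) :
    ∃ e : ∀ A B : DGModule Ω.alg,
        ↥(cotensor C Ω A B) ≃ₗ[ℚ] (C.carrier ⊗[ℚ] (A.carrier ⊗[ℚ] B.carrier)),
      -- the isomorphism is a chain map:
      (∀ A B : DGModule Ω.alg,
        ∃ hD : ∀ x ∈ cotensor C Ω A B, cotDiff C Ω A B x ∈ cotensor C Ω A B,
          (e A B).toLinearMap.comp ((cotDiff C Ω A B).restrict hD)
            = (diagCoextD C Ω A B).comp (e A B).toLinearMap) ∧
      -- the isomorphism is colinear: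
      (∀ A B : DGModule Ω.alg,
        ∃ ρcot : ↥(cotensor C Ω A B) →ₗ[ℚ] C.carrier ⊗[ℚ] ↥(cotensor C Ω A B),
          (TensorProduct.map LinearMap.id (cotensor C Ω A B).subtype).comp ρcot
              = (cotCoact C Ω A B).comp (cotensor C Ω A B).subtype ∧
          (TensorProduct.map LinearMap.id (e A B).toLinearMap).comp ρcot
            = (coextCoact C.toDGCoalgebra (A.carrier ⊗[ℚ] B.carrier)).comp
                (e A B).toLinearMap) ∧
      -- and natural in `A` and `B`:
      (∀ (A B A' B' : DGModule Ω.alg) (f : A.carrier →ₗ[ℚ] A'.carrier)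
          (g : B.carrier →ₗ[ℚ] B'.carrier),
        IsModuleHom Ω.alg A A' f → IsModuleHom Ω.alg B B' g →
        ∃ hF : ∀ x ∈ cotensor C Ω A B,
            (TensorProduct.map (TensorProduct.map LinearMap.id f)
              (TensorProduct.map LinearMap.id g)) x ∈ cotensor C Ω A' B',
          (e A' B').toLinearMap.comp
              ((TensorProduct.map (TensorProduct.map LinearMap.id f)
                (TensorProduct.map LinearMap.id g)).restrict hF)
            = (TensorProduct.map LinearMap.id (TensorProduct.map f g)).comp
                (e A B).toLinearMap) := by
  refine ⟨fun A B => cotEquiv C Ω A B, fun A B => ?_, fun A B => ?_, ?_⟩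
  · have hD : ∀ x ∈ cotensor C Ω A B, cotDiff C Ω A B x
        = phi C Ω A B (diagCoextD C Ω A B (psi C Ω A B x)) := by
      intro x hx
      have h := LinearMap.congr_fun (phi_chain C Ω A B hcc) (psi C Ω A B x)
      simp only [LinearMap.comp_apply] at h
      rw [h, phi_psi_mem C Ω A B x hx]
    refine ⟨fun x hx => hD x hx ▸ phi_mem C Ω A B _, LinearMap.ext fun x => ?_⟩
    apply phi_injective C Ω A B
    refine (phi_cotEquiv C Ω A B _).trans ?_
    exact hD x.1 x.2
  · refine ⟨(TensorProduct.map LinearMap.id (cotEquiv C Ω A B).symm.toLinearMap).comp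
      ((coextCoact C.toDGCoalgebra (A.carrier ⊗[ℚ] B.carrier)).comp
        (cotEquiv C Ω A B).toLinearMap), ?_, ?_⟩
    · have h1 : (cotensor C Ω A B).subtype.comp (cotEquiv C Ω A B).symm.toLinearMap
          = phi C Ω A B := rfl
      have h2 : (phi C Ω A B).comp (cotEquiv C Ω A B).toLinearMap
          = (cotensor C Ω A B).subtype := LinearMap.ext fun x => phi_cotEquiv C Ω A B x
      rw [← LinearMap.comp_assoc, ← TensorProduct.map_comp, h1, LinearMap.id_comp,
        ← LinearMap.comp_assoc, phi_coact, LinearMap.comp_assoc, h2]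
    · rw [← LinearMap.comp_assoc, ← TensorProduct.map_comp, LinearMap.id_comp,
        LinearEquiv.comp_symm, TensorProduct.map_id, LinearMap.id_comp]
  · intro A B A' B' f g hf hg
    have hF : ∀ x ∈ cotensor C Ω A B, TensorProduct.map (TensorProduct.map LinearMap.id f)
          (TensorProduct.map LinearMap.id g) x
        = phi C Ω A' B' (TensorProduct.map LinearMap.id (TensorProduct.map f g)
            (psi C Ω A B x)) := by
      intro x hx
      have h := LinearMap.congr_fun (phi_natural C Ω A B A' B' f g hf.1) (psi C Ω A B x)
      simp only [LinearMap.comp_apply] at h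
      rw [h, phi_psi_mem C Ω A B x hx]
    refine ⟨fun x hx => hF x hx ▸ phi_mem C Ω A' B' _, LinearMap.ext fun x => ?_⟩
    apply phi_injective C Ω A' B'
    refine (phi_cotEquiv C Ω A' B' _).trans ?_
    exact hF x.1 x.2

end
end

section
/- Let C be a 2-reduced dg coalgebra over ℚ, A a connective (non-negatively graded) dg algebra over ℚ, and τ : C ⇝ A a twisting chain. If f : M → M' is a quasi-isomorphism between bounded below left dg A-modules, then the induced map of twisted coextensions C ⊗^τ M → C ⊗^τ M' is a quasi-isomorphism. -/
open scoped TensorProduct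

noncomputable section

theorem parityOf_apply_mem {V : Type} [AddCommGroup V] [Module ℚ V] (g : ℤ → Submodule ℚ V)
    [DirectSum.Decomposition g] (n : ℤ) (x : V) (hx : x ∈ g n) :
    parityOf g x = ((-1 : ℚ) ^ n) • x := by
  lift x to g n using hx
  simp only [parityOf, signOpOf, LinearMap.comp_apply, LinearEquiv.coe_coe,
    DirectSum.decomposeLinearEquiv_apply, DirectSum.decompose_coe, one_mul]
  exact (DirectSum.toModule_lof (M := fun i => g i) ℚ
    (φ := fun n => ((-1 : ℚ) ^ n) • (g n).subtype) n x)

theorem neg_one_zpow_sq (n : ℤ) : ((-1 : ℚ) ^ n) * ((-1 : ℚ) ^ n) = 1 := by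
  rw [← mul_zpow]; simp

theorem neg_one_zpow_sub (n : ℤ) : ((-1 : ℚ) ^ (n - 1)) = - ((-1 : ℚ) ^ n) := by
  rw [zpow_sub_one₀ (by norm_num)]; norm_num

/-- Two linear maps that agree on homogeneous elements agree. -/
theorem graded_ext {V W : Type} [AddCommGroup V] [Module ℚ V] [AddCommGroup W] [Module ℚ W]
    (g : ℤ → Submodule ℚ V) [DirectSum.Decomposition g] (p q : V →ₗ[ℚ] W)
    (h : ∀ n, ∀ x ∈ g n, p x = q x) (x : V) : p x = q x := by
  induction x using DirectSum.Decomposition.inductionOn g with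
  | zero => simp
  | homogeneous m => exact h _ _ m.2
  | add a b ha hb => simp [ha, hb]

theorem parity_parity (V : DGVect) (x : V.carrier) :
    parityOf V.grading (parityOf V.grading x) = x := by
  refine graded_ext V.grading ((parityOf V.grading).comp (parityOf V.grading)) LinearMap.id ?_ x
  intro n x hx
  simp [parityOf_apply_mem _ n x hx, smul_smul, neg_one_zpow_sq]

theorem parity_d (V : DGVect) (x : V.carrier) :
    parityOf V.grading (V.d x) = - V.d (parityOf V.grading x) := by
  refine graded_ext V.grading ((parityOf V.grading).comp V.d)
    (- (V.d.comp (parityOf V.grading))) ?_ x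
  intro n x hx
  simp [parityOf_apply_mem _ n x hx, parityOf_apply_mem _ _ _ (V.d_mem n x hx),
    neg_one_zpow_sub]

theorem parity_tensor (V : DGVect) (n : ℤ) (u : V.carrier ⊗[ℚ] V.carrier)
    (hu : u ∈ tensorGrading V.grading V.grading n) :
    TensorProduct.map (parityOf V.grading) (parityOf V.grading) u = ((-1 : ℚ) ^ n) • u := by
  have : tensorGrading V.grading V.grading n ≤ LinearMap.eqLocus
      (TensorProduct.map (parityOf V.grading) (parityOf V.grading))
      (((-1 : ℚ) ^ n) • LinearMap.id) := by
    refine iSup_le ?_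
    rintro ⟨⟨i, j⟩, hij⟩ _ ⟨y, rfl⟩
    induction y using TensorProduct.induction_on with
    | zero => simp
    | add a b ha hb => rw [map_add]; exact Submodule.add_mem _ ha hb
    | tmul a b =>
      simp only at hij
      subst hij
      simp [LinearMap.mem_eqLocus, parityOf_apply_mem _ i _ a.2, parityOf_apply_mem _ j _ b.2,
        TensorProduct.smul_tmul', TensorProduct.tmul_smul, smul_smul,
        zpow_add₀, mul_comm]
  exact this hu

theorem comul_parity (C : DGCoalgebra) (c : C.carrier) :
    C.comul (parityOf C.grading c)
      = TensorProduct.map (parityOf C.grading) (parityOf C.grading) (C.comul c) := by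
  refine graded_ext C.grading (C.comul.comp (parityOf C.grading))
    ((TensorProduct.map (parityOf C.grading) (parityOf C.grading)).comp C.comul) ?_ c
  intro n x hx
  have := parity_tensor C.toDGVect n _ (C.comul_mem n x hx)
  simp [parityOf_apply_mem _ n x hx, this]

theorem d_tau_smul (C : DGCoalgebra) (A : DGAlgebra) (τ : TwistingChain C A) (M : DGModule A)
    (m : M.carrier) (b : C.carrier) :
    M.d (M.smul (τ.toFun b) m) =
      M.smul (A.d (τ.toFun b)) m - M.smul (τ.toFun (parityOf C.grading b)) (M.d m) := by
  refine graded_ext C.grading (M.d.comp ((M.smul.flip m).comp τ.toFun))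
    ((M.smul.flip m).comp (A.d.comp τ.toFun)
      - (M.smul.flip (M.d m)).comp (τ.toFun.comp (parityOf C.grading))) ?_ b
  intro n x hx
  simp only [LinearMap.comp_apply, LinearMap.sub_apply, LinearMap.flip_apply,
    parityOf_apply_mem _ n x hx, M.leibniz _ _ m (τ.mem n x hx), neg_one_zpow_sub, map_smul,
    LinearMap.smul_apply, neg_smul]
  rw [sub_eq_add_neg]

/-- The twisting term of the coextension differential. -/
def twT (C : DGCoalgebra) (A : DGAlgebra) (τ : TwistingChain C A) (M : DGModule A) :
    C.carrier ⊗[ℚ] M.carrier →ₗ[ℚ] C.carrier ⊗[ℚ] M.carrier :=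
  (TensorProduct.map (parityOf C.grading)
    (M.actionMap.comp (TensorProduct.map τ.toFun LinearMap.id))).comp (coextCoact C M.carrier)

/-- The map `a ⊗ b ↦ (-1)^|a| a ⊗ τ(b) m`. -/
def twG (C : DGCoalgebra) (A : DGAlgebra) (τ : TwistingChain C A) (M : DGModule A)
    (m : M.carrier) : C.carrier ⊗[ℚ] C.carrier →ₗ[ℚ] C.carrier ⊗[ℚ] M.carrier :=
  TensorProduct.map (parityOf C.grading) ((M.smul.flip m).comp τ.toFun)

theorem twT_tmul (C : DGCoalgebra) (A : DGAlgebra) (τ : TwistingChain C A) (M : DGModule A)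
    (c : C.carrier) (m : M.carrier) :
    twT C A τ M (c ⊗ₜ m) = twG C A τ M m (C.comul c) := by
  simp only [twT, coextCoact, LinearMap.comp_apply, TensorProduct.map_tmul, LinearMap.id_apply]
  generalize C.comul c = u
  induction u using TensorProduct.induction_on with
  | zero => simp
  | add a b ha hb => simp only [TensorProduct.add_tmul, map_add, ha, hb]
  | tmul a b => simp [twG, DGModule.actionMap]

theorem coextDiff_tmul (C : DGCoalgebra) (A : DGAlgebra) (τ : TwistingChain C A) (M : DGModule A)
    (c : C.carrier) (m : M.carrier) :
    coextDiff C A τ M.carrier M.d M.actionMap (c ⊗ₜ m) =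
      C.d c ⊗ₜ m + parityOf C.grading c ⊗ₜ M.d m + twG C A τ M m (C.comul c) := by
  rw [← twT_tmul]; rfl

/-- The map `b ⊗ b' ↦ τ((-1)^|b| b) τ(b') m`. -/
def twQ (C : DGCoalgebra) (A : DGAlgebra) (τ : TwistingChain C A) (M : DGModule A)
    (m : M.carrier) : C.carrier ⊗[ℚ] C.carrier →ₗ[ℚ] M.carrier :=
  (M.smul.flip m).comp (A.mulMap.comp
    (TensorProduct.map (τ.toFun.comp (parityOf C.grading)) τ.toFun))

theorem twT_twG (C : DGCoalgebra) (A : DGAlgebra) (τ : TwistingChain C A) (M : DGModule A)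
    (m : M.carrier) (u : C.carrier ⊗[ℚ] C.carrier) :
    twT C A τ M (twG C A τ M m u) =
      TensorProduct.map LinearMap.id (twQ C A τ M m)
        (TensorProduct.assoc ℚ _ _ _ (TensorProduct.map C.comul LinearMap.id u)) := by
  induction u using TensorProduct.induction_on with
  | zero => simp
  | add a b ha hb => simp only [map_add, ha, hb]
  | tmul a b =>
    rw [twG, TensorProduct.map_tmul, twT_tmul, comul_parity, TensorProduct.map_tmul]
    generalize C.comul a = v
    induction v using TensorProduct.induction_on with
    | zero => simp
    | add a b ha hb => simp only [TensorProduct.add_tmul, map_add, ha, hb]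
    | tmul x y =>
      simp [twG, twQ, DGAlgebra.mulMap, parity_parity C.toDGVect, M.mul_smul']

theorem twist_smul (C : DGCoalgebra) (A : DGAlgebra) (τ : TwistingChain C A) (M : DGModule A)
    (m : M.carrier) (b : C.carrier) :
    M.smul (A.d (τ.toFun b)) m + M.smul (τ.toFun (C.d b)) m + twQ C A τ M m (C.comul b) = 0 := by
  have := congrArg (fun a => M.smul a m) (LinearMap.congr_fun τ.twist b)
  simpa [twQ] using this

theorem mixed (C : DGCoalgebra) (A : DGAlgebra) (τ : TwistingChain C A) (M : DGModule A)
    (m : M.carrier) (u : C.carrier ⊗[ℚ] C.carrier) :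
    twG C A τ M m ((TensorProduct.map C.d LinearMap.id
        + TensorProduct.map (parityOf C.grading) C.d :
          C.carrier ⊗[ℚ] C.carrier →ₗ[ℚ] C.carrier ⊗[ℚ] C.carrier) u)
      + twG C A τ M (M.d m) (TensorProduct.map (parityOf C.grading) (parityOf C.grading) u)
      + TensorProduct.map C.d LinearMap.id (twG C A τ M m u)
      + TensorProduct.map (parityOf C.grading) M.d (twG C A τ M m u)
      + TensorProduct.map LinearMap.id (twQ C A τ M m)
          (TensorProduct.map LinearMap.id C.comul u) = 0 := by
  induction u using TensorProduct.induction_on with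
  | zero => simp
  | add a b ha hb =>
    simp only [map_add]
    rw [← add_zero (0 : C.carrier ⊗[ℚ] M.carrier)]
    nth_rewrite 1 [← ha]
    rw [← hb]
    abel
  | tmul a b =>
    have h := twist_smul C A τ M m b
    have h2 : twQ C A τ M m (C.comul b) =
      - M.smul (A.d (τ.toFun b)) m - M.smul (τ.toFun (C.d b)) m := by
      rw [eq_comm, ← sub_eq_zero, ← neg_eq_zero, ← h]; abel
    simp only [twG, LinearMap.add_apply, map_add, TensorProduct.map_tmul, LinearMap.id_apply,
      LinearMap.comp_apply, LinearMap.flip_apply, parity_parity C.toDGVect, h2,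
      parity_d C.toDGVect, d_tau_smul, TensorProduct.tmul_sub, TensorProduct.neg_tmul,
      TensorProduct.tmul_neg]
    abel

theorem coextDiff_sq (C : DGCoalgebra) (A : DGAlgebra) (τ : TwistingChain C A) (M : DGModule A)
    (x : C.carrier ⊗[ℚ] M.carrier) :
    coextDiff C A τ M.carrier M.d M.actionMap
      (coextDiff C A τ M.carrier M.d M.actionMap x) = 0 := by
  have hsplit : ∀ y, coextDiff C A τ M.carrier M.d M.actionMap y =
      TensorProduct.map C.d LinearMap.id y + TensorProduct.map (parityOf C.grading) M.d y
        + twT C A τ M y := fun y => rfl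
  induction x using TensorProduct.induction_on with
  | zero => simp
  | add a b ha hb => simp only [map_add, ha, hb, add_zero]
  | tmul c m =>
    have hd : ∀ c, C.d (C.d c) = 0 := fun c => LinearMap.congr_fun C.d_sq c
    have hdM : ∀ c, M.d (M.d c) = 0 := fun c => LinearMap.congr_fun M.d_sq c
    have hco := LinearMap.congr_fun C.coassoc c
    have hch := LinearMap.congr_fun C.comul_chain c
    have hm := mixed C A τ M m (C.comul c)
    simp only [LinearMap.comp_apply, LinearEquiv.coe_coe] at hco hch
    rw [← hco, ← twT_twG, ← hch, ← comul_parity] at hm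
    rw [coextDiff_tmul, map_add, map_add, coextDiff_tmul, coextDiff_tmul, hsplit, hd, hdM,
      parity_d C.toDGVect, TensorProduct.zero_tmul, TensorProduct.tmul_zero,
      TensorProduct.neg_tmul]
    refine Eq.trans ?_ hm
    abel

theorem coext_map (C : DGCoalgebra) (A : DGAlgebra) (τ : TwistingChain C A) (M M' : DGModule A)
    (f : M.carrier →ₗ[ℚ] M'.carrier) (hf : IsModuleHom A M M' f)
    (x : C.carrier ⊗[ℚ] M.carrier) :
    TensorProduct.map LinearMap.id f (coextDiff C A τ M.carrier M.d M.actionMap x) =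
      coextDiff C A τ M'.carrier M'.d M'.actionMap (TensorProduct.map LinearMap.id f x) := by
  induction x using TensorProduct.induction_on with
  | zero => simp
  | add a b ha hb => simp only [map_add, ha, hb]
  | tmul c m =>
    have h1 : ∀ m, f (M.d m) = M'.d (f m) := fun m => LinearMap.congr_fun hf.2.1 m
    have h2 : ∀ a m, f (M.smul a m) = M'.smul a (f m) := fun a m => by
      simpa [DGModule.actionMap] using LinearMap.congr_fun hf.2.2 (a ⊗ₜ m)
    rw [TensorProduct.map_tmul, coextDiff_tmul, coextDiff_tmul, map_add, map_add,
      TensorProduct.map_tmul, TensorProduct.map_tmul, h1]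
    simp only [LinearMap.id_apply]
    congr 1
    generalize C.comul c = u
    induction u using TensorProduct.induction_on with
    | zero => simp
    | add a b ha hb => simp only [map_add, ha, hb]
    | tmul a b => simp [twG, h2]

/-- The filtration of `C ⊗ M` by the degree in `C`. -/
def coFil (C : DGCoalgebra) (M : Type) [AddCommGroup M] [Module ℚ M] (n : ℕ) :
    Submodule ℚ (C.carrier ⊗[ℚ] M) :=
  Submodule.span ℚ {x | ∃ (q : ℤ) (c : C.carrier) (m : M), q < n ∧ c ∈ C.grading q ∧ x = c ⊗ₜ m}

theorem coFil_zero (C : DGCoalgebra) (M : Type) [AddCommGroup M] [Module ℚ M] :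
    coFil C M 0 = ⊥ := by
  rw [coFil, Submodule.span_eq_bot]
  rintro _ ⟨q, c, m, hq, hc, rfl⟩
  rw [C.nonneg q (by simpa using hq)] at hc
  rw [(Submodule.mem_bot ℚ).1 hc, TensorProduct.zero_tmul]

theorem coFil_mono (C : DGCoalgebra) (M : Type) [AddCommGroup M] [Module ℚ M] :
    Monotone (coFil C M) := by
  intro a b hab
  refine Submodule.span_mono ?_
  rintro _ ⟨q, c, m, hq, hc, rfl⟩
  exact ⟨q, c, m, by omega, hc, rfl⟩

theorem coFil_exhaust (C : DGCoalgebra) (M : Type) [AddCommGroup M] [Module ℚ M]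
    (x : C.carrier ⊗[ℚ] M) : ∃ n, x ∈ coFil C M n := by
  induction x using TensorProduct.induction_on with
  | zero => exact ⟨0, zero_mem _⟩
  | add a b ha hb =>
    obtain ⟨i, hi⟩ := ha
    obtain ⟨j, hj⟩ := hb
    exact ⟨max i j, add_mem (coFil_mono C M (le_max_left i j) hi)
      (coFil_mono C M (le_max_right i j) hj)⟩
  | tmul c m =>
    induction c using DirectSum.Decomposition.inductionOn C.grading with
    | zero => exact ⟨0, by simp⟩
    | @homogeneous q c =>
      refine ⟨(q + 1).toNat, Submodule.subset_span ⟨q, c, m, ?_, c.2, rfl⟩⟩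
      have := Int.self_le_toNat (q + 1)
      omega
    | add a b ha hb =>
      obtain ⟨i, hi⟩ := ha
      obtain ⟨j, hj⟩ := hb
      refine ⟨max i j, ?_⟩
      rw [TensorProduct.add_tmul]
      exact add_mem (coFil_mono C M (le_max_left i j) hi) (coFil_mono C M (le_max_right i j) hj)

theorem coFil_id_map (C : DGCoalgebra) {M M' : Type} [AddCommGroup M] [Module ℚ M]
    [AddCommGroup M'] [Module ℚ M'] (g : M →ₗ[ℚ] M') (n : ℕ) (x : C.carrier ⊗[ℚ] M)
    (hx : x ∈ coFil C M n) : TensorProduct.map LinearMap.id g x ∈ coFil C M' n := by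
  suffices coFil C M n ≤ (coFil C M' n).comap (TensorProduct.map LinearMap.id g) from this hx
  refine Submodule.span_le.2 ?_
  rintro _ ⟨q, c, m, hq, hc, rfl⟩
  exact Submodule.subset_span ⟨q, c, g m, hq, hc, by simp⟩

theorem coFil_parity_map (C : DGCoalgebra) {M M' : Type} [AddCommGroup M] [Module ℚ M]
    [AddCommGroup M'] [Module ℚ M'] (g : M →ₗ[ℚ] M') (n : ℕ) (x : C.carrier ⊗[ℚ] M)
    (hx : x ∈ coFil C M n) :
    TensorProduct.map (parityOf C.grading) g x ∈ coFil C M' n := by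
  suffices coFil C M n ≤ (coFil C M' n).comap (TensorProduct.map (parityOf C.grading) g) from
    this hx
  refine Submodule.span_le.2 ?_
  rintro _ ⟨q, c, m, hq, hc, rfl⟩
  refine Submodule.subset_span ⟨q, parityOf C.grading c, g m, hq, ?_, by simp⟩
  rw [parityOf_apply_mem _ q c hc]
  exact Submodule.smul_mem _ _ hc

/-- The part of the twisted differential lowering the filtration. -/
def lowT (C : DGCoalgebra) (A : DGAlgebra) (τ : TwistingChain C A) (M : DGModule A) :
    C.carrier ⊗[ℚ] M.carrier →ₗ[ℚ] C.carrier ⊗[ℚ] M.carrier :=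
  TensorProduct.map C.d LinearMap.id + twT C A τ M

theorem coFil_lowT (C : DGCoalgebra) (A : DGAlgebra) (hA : A.Connective) (τ : TwistingChain C A)
    (M : DGModule A) (n : ℕ) (x : C.carrier ⊗[ℚ] M.carrier)
    (hx : x ∈ coFil C M.carrier (n + 1)) : lowT C A τ M x ∈ coFil C M.carrier n := by
  suffices coFil C M.carrier (n + 1) ≤ (coFil C M.carrier n).comap (lowT C A τ M) from this hx
  refine Submodule.span_le.2 ?_
  rintro _ ⟨q, c, m, hq, hc, rfl⟩
  simp only [Submodule.comap_coe, Set.mem_preimage, lowT, LinearMap.add_apply, SetLike.mem_coe,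
    twT_tmul]
  push_cast at hq
  refine add_mem (Submodule.subset_span ⟨q - 1, C.d c, m, by omega, C.d_mem _ _ hc, by simp⟩) ?_
  suffices tensorGrading C.grading C.grading q ≤
    (coFil C M.carrier n).comap (twG C A τ M m) from this (C.comul_mem _ _ hc)
  refine iSup_le ?_
  rintro ⟨⟨i, j⟩, hij⟩ _ ⟨y, rfl⟩
  induction y using TensorProduct.induction_on with
  | zero => simp
  | add a b ha hb => rw [map_add]; exact Submodule.add_mem _ ha hb
  | tmul a b =>
    simp only at hij
    simp only [Submodule.mem_comap, TensorProduct.map_tmul, twG, Submodule.subtype_apply,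
      LinearMap.comp_apply, LinearMap.flip_apply]
    by_cases hj : j < 1
    · have := τ.mem j b b.2
      rw [hA (j - 1) (by omega)] at this
      rw [(Submodule.mem_bot ℚ).1 this]
      simp
    · refine Submodule.subset_span ⟨i, parityOf C.grading a, _, by omega, ?_, rfl⟩
      rw [parityOf_apply_mem _ i _ a.2]
      exact Submodule.smul_mem _ _ a.2

/-- The mapping cone differential. -/
def coneD {V W : Type} [AddCommGroup V] [Module ℚ V] [AddCommGroup W] [Module ℚ W]
    (dV : V →ₗ[ℚ] V) (dW : W →ₗ[ℚ] W) (f : V →ₗ[ℚ] W) : V × W →ₗ[ℚ] V × W :=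
  (-(dV.comp (LinearMap.fst ℚ V W))).prod
    (f.comp (LinearMap.fst ℚ V W) + dW.comp (LinearMap.snd ℚ V W))

theorem coneD_apply {V W : Type} [AddCommGroup V] [Module ℚ V] [AddCommGroup W] [Module ℚ W]
    (dV : V →ₗ[ℚ] V) (dW : W →ₗ[ℚ] W) (f : V →ₗ[ℚ] W) (v : V) (w : W) :
    coneD dV dW f (v, w) = (- dV v, f v + dW w) := rfl

theorem coneD_sq {V W : Type} [AddCommGroup V] [Module ℚ V] [AddCommGroup W] [Module ℚ W]
    (dV : V →ₗ[ℚ] V) (dW : W →ₗ[ℚ] W) (f : V →ₗ[ℚ] W) (hV : ∀ v, dV (dV v) = 0)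
    (hW : ∀ v, dW (dW v) = 0) (hf : ∀ v, f (dV v) = dW (f v)) (x : V × W) :
    coneD dV dW f (coneD dV dW f x) = 0 := by
  obtain ⟨v, w⟩ := x
  simp [coneD_apply, hV, hW, hf]

theorem cone_acyclic {V W : Type} [AddCommGroup V] [Module ℚ V] [AddCommGroup W] [Module ℚ W]
    (dV : V →ₗ[ℚ] V) (dW : W →ₗ[ℚ] W) (f : V →ₗ[ℚ] W) (hf : ∀ v, f (dV v) = dW (f v))
    (h : IsQuasiIso dV dW f) (x : V × W) (hx : coneD dV dW f x = 0) :
    ∃ y, x = coneD dV dW f y := by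
  obtain ⟨v, w⟩ := x
  simp only [coneD_apply, Prod.mk_eq_zero, neg_eq_zero] at hx
  obtain ⟨hv, hw⟩ := hx
  obtain ⟨z, hz⟩ := h.1 v hv ⟨-w, by rw [map_neg]; exact eq_neg_of_add_eq_zero_left hw⟩
  obtain ⟨x, hx, y, hy⟩ := h.2 (w + f z) (by rw [map_add, ← hf, ← hz, add_comm]; exact hw)
  refine ⟨(x - z, y), ?_⟩
  rw [coneD_apply, ← hy, map_sub, map_sub, hx, ← hz]
  ext <;> simp

theorem quasiIso_of_cone {V W : Type} [AddCommGroup V] [Module ℚ V] [AddCommGroup W] [Module ℚ W]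
    (dV : V →ₗ[ℚ] V) (dW : W →ₗ[ℚ] W) (f : V →ₗ[ℚ] W)
    (h : ∀ x, coneD dV dW f x = 0 → ∃ y, x = coneD dV dW f y) : IsQuasiIso dV dW f := by
  constructor
  · rintro x hx ⟨y, hy⟩
    obtain ⟨⟨a, b⟩, hab⟩ := h (x, -y) (by simp [coneD_apply, hx, hy])
    refine ⟨-a, ?_⟩
    rw [map_neg]
    exact congrArg Prod.fst hab
  · intro w hw
    obtain ⟨⟨a, b⟩, hab⟩ := h (0, w) (by simp [coneD_apply, hw])
    simp only [coneD_apply, Prod.mk.injEq] at hab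
    refine ⟨a, neg_eq_zero.1 hab.1.symm, b, ?_⟩
    rw [hab.2]; abel

theorem exists_contraction {K : Type} [AddCommGroup K] [Module ℚ K] (D : K →ₗ[ℚ] K)
    (hsq : ∀ x, D (D x) = 0) (hac : ∀ x, D x = 0 → ∃ y, x = D y) :
    ∃ h : K →ₗ[ℚ] K, ∀ x, D (h x) + h (D x) = x := by
  obtain ⟨s', hs'⟩ := LinearMap.exists_rightInverse_of_surjective D.rangeRestrict
    D.range_rangeRestrict
  obtain ⟨s, hs⟩ := LinearMap.exists_extend s'
  have key : ∀ y, D (s (D y)) = D y := by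
    intro y
    have h1 := congrArg Subtype.val (LinearMap.congr_fun hs' (D.rangeRestrict y))
    have h2 := LinearMap.congr_fun hs (D.rangeRestrict y)
    have h3 : s (D y) = s' (D.rangeRestrict y) := h2
    rw [h3]
    exact h1
  refine ⟨s.comp (LinearMap.id - s.comp D), fun x => ?_⟩
  simp only [LinearMap.comp_apply, LinearMap.sub_apply, LinearMap.id_apply, hsq, map_zero,
    sub_zero]
  obtain ⟨y, hy⟩ := hac (x - s (D x)) (by rw [map_sub, key, sub_self])
  rw [hy, key, ← hy]
  abel

theorem filtered_acyclic {K : Type} [AddCommGroup K] [Module ℚ K] (D D0 t H : K →ₗ[ℚ] K)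
    (F : ℕ → Submodule ℚ K) (hD : ∀ x, D x = D0 x + t x) (hsq : ∀ x, D (D x) = 0)
    (hH : ∀ x, D0 (H x) + H (D0 x) = x) (h0 : F 0 = ⊥) (hex : ∀ x, ∃ n, x ∈ F n)
    (hHF : ∀ n, ∀ x ∈ F n, H x ∈ F n) (htF : ∀ n, ∀ x ∈ F (n + 1), t x ∈ F n)
    (x : K) (hx : D x = 0) : ∃ y, x = D y := by
  obtain ⟨n, hn⟩ := hex x
  induction n generalizing x with
  | zero =>
    rw [h0] at hn
    exact ⟨0, by rw [(Submodule.mem_bot ℚ).1 hn, map_zero]⟩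
  | succ n ih =>
    have e : x - D (H x) = - (t (H x) + H (t x)) := by
      have h1 : H (D0 x) + H (t x) = 0 := by rw [← map_add, ← hD, hx, map_zero]
      have h2 := hH x
      rw [eq_neg_of_add_eq_zero_left h1] at h2
      rw [hD]
      nth_rewrite 1 [← h2]
      abel
    obtain ⟨y, hy⟩ := ih (x - D (H x)) (by rw [map_sub, hx, hsq, sub_zero]) (by
      rw [e]
      exact neg_mem (add_mem (htF _ _ (hHF _ _ hn)) (hHF _ _ (htF _ _ hn))))
    exact ⟨y + H x, by rw [map_add, ← hy]; abel⟩

/-! ## Statement 15: twisted coextension preserves quasi-isomorphisms of bounded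
below modules -/

/-- Let `C` be a 2-reduced dg coalgebra, `A` a connective dg algebra
and `τ : C ⇝ A` a twisting chain.  If `f : M → M'` is a quasi-isomorphism between
bounded below left dg `A`-modules, then the induced map of twisted coextensions
`C ⊗^τ M → C ⊗^τ M'` is a quasi-isomorphism. -/
theorem twisted_coextension_preserves_quasiIso_of_boundedBelow
    (C : CoaugDGCoalgebra) (hred : C.TwoReduced)
    (A : DGAlgebra) (hA : A.Connective) (τ : TwistingChain C.toDGCoalgebra A)
    (M M' : DGModule A) (hM : M.toDGVect.BoundedBelow) (hM' : M'.toDGVect.BoundedBelow)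
    (f : M.carrier →ₗ[ℚ] M'.carrier) (hf : IsModuleHom A M M' f)
    (hq : IsQuasiIso M.d M'.d f) :
    IsQuasiIso
      (coextDiff C.toDGCoalgebra A τ M.carrier M.d M.actionMap)
      (coextDiff C.toDGCoalgebra A τ M'.carrier M'.d M'.actionMap)
      (TensorProduct.map LinearMap.id f) := by
  have hfd : ∀ m, f (M.d m) = M'.d (f m) := fun m => LinearMap.congr_fun hf.2.1 m
  obtain ⟨h, hh⟩ := exists_contraction (coneD M.d M'.d f)
    (coneD_sq _ _ _ (fun v => LinearMap.congr_fun M.d_sq v)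
      (fun v => LinearMap.congr_fun M'.d_sq v) hfd)
    (cone_acyclic _ _ _ hfd hq)
  have key := hh
  let h11 : M.carrier →ₗ[ℚ] M.carrier := LinearMap.fst ℚ _ _ ∘ₗ h ∘ₗ LinearMap.inl ℚ _ _
  let h12 : M'.carrier →ₗ[ℚ] M.carrier := LinearMap.fst ℚ _ _ ∘ₗ h ∘ₗ LinearMap.inr ℚ _ _
  let h21 : M.carrier →ₗ[ℚ] M'.carrier := LinearMap.snd ℚ _ _ ∘ₗ h ∘ₗ LinearMap.inl ℚ _ _
  let h22 : M'.carrier →ₗ[ℚ] M'.carrier := LinearMap.snd ℚ _ _ ∘ₗ h ∘ₗ LinearMap.inr ℚ _ _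
  have hform : ∀ v w, h (v, w) = (h11 v + h12 w, h21 v + h22 w) := by
    intro v w
    have : (v, w) = LinearMap.inl ℚ M.carrier M'.carrier v
      + LinearMap.inr ℚ M.carrier M'.carrier w := by simp
    rw [this, map_add]
    rfl
  clear_value h11 h12 h21 h22
  have e1 : ∀ v, - M.d (h11 v) + (- h11 (M.d v) + h12 (f v)) = v := by
    intro v
    have := congrArg Prod.fst (hh (v, 0))
    simpa [hform, coneD_apply] using this
  have e2 : ∀ v, f (h11 v) + M'.d (h21 v) + (- h21 (M.d v) + h22 (f v)) = 0 := by
    intro v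
    have := congrArg Prod.snd (hh (v, 0))
    simpa [hform, coneD_apply] using this
  have e3 : ∀ w, - M.d (h12 w) + h12 (M'.d w) = 0 := by
    intro w
    have := congrArg Prod.fst (hh (0, w))
    simpa [hform, coneD_apply] using this
  have e4 : ∀ w, f (h12 w) + M'.d (h22 w) + h22 (M'.d w) = w := by
    intro w
    have := congrArg Prod.snd (hh (0, w))
    simpa [hform, coneD_apply] using this
  let σ := parityOf C.grading
  have hσ : ∀ c, σ (σ c) = c := parity_parity C.toDGVect
  let H : (C.carrier ⊗[ℚ] M.carrier) × (C.carrier ⊗[ℚ] M'.carrier) →ₗ[ℚ] (C.carrier ⊗[ℚ] M.carrier) × (C.carrier ⊗[ℚ] M'.carrier) :=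
    (TensorProduct.map σ h11 ∘ₗ LinearMap.fst ℚ _ _
      + TensorProduct.map LinearMap.id h12 ∘ₗ LinearMap.snd ℚ _ _).prod
    (TensorProduct.map LinearMap.id h21 ∘ₗ LinearMap.fst ℚ _ _
      + TensorProduct.map σ h22 ∘ₗ LinearMap.snd ℚ _ _)
  have hHa : ∀ x y, H (x, y) = (TensorProduct.map σ h11 x + TensorProduct.map LinearMap.id h12 y,
    TensorProduct.map LinearMap.id h21 x + TensorProduct.map σ h22 y) := fun _ _ => rfl
  let t : (C.carrier ⊗[ℚ] M.carrier) × (C.carrier ⊗[ℚ] M'.carrier) →ₗ[ℚ] (C.carrier ⊗[ℚ] M.carrier) × (C.carrier ⊗[ℚ] M'.carrier) :=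
    (-(lowT C.toDGCoalgebra A τ M ∘ₗ LinearMap.fst ℚ _ _)).prod
      (lowT C.toDGCoalgebra A τ M' ∘ₗ LinearMap.snd ℚ _ _)
  have hta : ∀ x y, t (x, y) = (- lowT C.toDGCoalgebra A τ M x, lowT C.toDGCoalgebra A τ M' y) :=
    fun _ _ => rfl
  have hs : ∀ (N : DGModule A) y, coextDiff C.toDGCoalgebra A τ N.carrier N.d N.actionMap y =
      TensorProduct.map σ N.d y + lowT C.toDGCoalgebra A τ N y := by
    intro N y
    have : coextDiff C.toDGCoalgebra A τ N.carrier N.d N.actionMap y =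
      TensorProduct.map C.d LinearMap.id y + TensorProduct.map σ N.d y
        + twT C.toDGCoalgebra A τ N y := rfl
    rw [this, lowT, LinearMap.add_apply]
    abel
  apply quasiIso_of_cone
  refine filtered_acyclic _
    (coneD (TensorProduct.map σ M.d) (TensorProduct.map σ M'.d) (TensorProduct.map LinearMap.id f))
    t H
    (fun n => (coFil C.toDGCoalgebra M.carrier n).prod (coFil C.toDGCoalgebra M'.carrier n))
    ?_ ?_ ?_ ?_ ?_ ?_ ?_
  · rintro ⟨x, y⟩
    simp only [coneD_apply, hta, hs, Prod.mk_add_mk]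
    ext
    · simp only; abel
    · simp only; abel
  · exact coneD_sq _ _ _ (coextDiff_sq _ A τ M) (coextDiff_sq _ A τ M') (coext_map _ A τ M M' f hf)
  · suffices hL : (coneD (TensorProduct.map σ M.d) (TensorProduct.map σ M'.d)
        (TensorProduct.map LinearMap.id f)) ∘ₗ H + H ∘ₗ (coneD (TensorProduct.map σ M.d)
        (TensorProduct.map σ M'.d) (TensorProduct.map LinearMap.id f)) = LinearMap.id from
      fun x => LinearMap.congr_fun hL x
    apply LinearMap.prod_ext
    · apply TensorProduct.ext'
      intro c m
      simp only [LinearMap.comp_apply, LinearMap.add_apply, LinearMap.inl_apply, coneD_apply, hHa,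
        TensorProduct.map_tmul, LinearMap.id_apply, map_zero, add_zero, hσ, Prod.mk_add_mk,
        map_neg, ← TensorProduct.tmul_neg, ← TensorProduct.tmul_add, e1, e2,
        TensorProduct.tmul_zero]
    · apply TensorProduct.ext'
      intro c m
      simp only [LinearMap.comp_apply, LinearMap.add_apply, LinearMap.inr_apply, coneD_apply, hHa,
        TensorProduct.map_tmul, LinearMap.id_apply, map_zero, add_zero, zero_add, neg_zero, hσ,
        Prod.mk_add_mk, ← TensorProduct.tmul_neg, ← TensorProduct.tmul_add, e3, e4,
        TensorProduct.tmul_zero]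
  · simp only [coFil_zero, Submodule.prod_bot]
  · rintro ⟨x, y⟩
    obtain ⟨i, hi⟩ := coFil_exhaust C.toDGCoalgebra _ x
    obtain ⟨j, hj⟩ := coFil_exhaust C.toDGCoalgebra _ y
    exact ⟨max i j, coFil_mono _ _ (le_max_left i j) hi, coFil_mono _ _ (le_max_right i j) hj⟩
  · rintro n ⟨x, y⟩ ⟨hx, hy⟩
    rw [hHa]
    exact ⟨add_mem (coFil_parity_map _ _ _ _ hx) (coFil_id_map _ _ _ _ hy),
      add_mem (coFil_id_map _ _ _ _ hx) (coFil_parity_map _ _ _ _ hy)⟩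
  · rintro n ⟨x, y⟩ ⟨hx, hy⟩
    rw [hta]
    exact ⟨neg_mem (coFil_lowT _ A hA τ M n x hx), coFil_lowT _ A hA τ M' n y hy⟩


end
end

section
/- Let C be a 2-reduced dg coalgebra over ℚ, A a connective (non-negatively graded) dg algebra over ℚ, and τ : C ⇝ A a twisting chain. If g : N → N' is a quasi-isomorphism between bounded below left dg C-comodules, then the induced map of twisted extensions A ⊗_τ N → A ⊗_τ N' is a quasi-isomorphism. -/
open scoped TensorProduct

noncomputable section

namespace TwExt

section Graded

variable {V W U : Type} [AddCommGroup V] [Module ℚ V] [AddCommGroup W] [Module ℚ W]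
  [AddCommGroup U] [Module ℚ U]
  (gV : ℤ → Submodule ℚ V) (gW : ℤ → Submodule ℚ W) (gU : ℤ → Submodule ℚ U)
  [DirectSum.Decomposition gV] [DirectSum.Decomposition gW] [DirectSum.Decomposition gU]

/-- Projection to the degree `i` part. -/
def proj (i : ℤ) : V →ₗ[ℚ] V :=
  ((gV i).subtype.comp (DirectSum.component ℚ ℤ (fun i => gV i) i)).comp
    (DirectSum.decomposeLinearEquiv gV).toLinearMap

theorem proj_apply (i : ℤ) (x : V) : proj gV i x = (DirectSum.decompose gV x i : V) := rfl

theorem proj_mem (i : ℤ) (x : V) : proj gV i x ∈ gV i := by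
  rw [proj_apply]; exact Subtype.mem _

theorem proj_same {i : ℤ} {x : V} (hx : x ∈ gV i) : proj gV i x = x := by
  rw [proj_apply, DirectSum.decompose_of_mem_same gV hx]

theorem proj_ne {i j : ℤ} {x : V} (hx : x ∈ gV i) (h : i ≠ j) : proj gV j x = 0 := by
  rw [proj_apply, DirectSum.decompose_of_mem_ne gV hx h]

theorem hom_ext {f g : V →ₗ[ℚ] W} (h : ∀ n, ∀ x ∈ gV n, f x = g x) : f = g := by
  ext x
  induction x using DirectSum.Decomposition.inductionOn gV with
  | zero => simp
  | homogeneous m => exact h _ _ m.2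
  | add a b ha hb => simp [ha, hb]

theorem proj_comm (e : V →ₗ[ℚ] W) (l : ℤ) (he : ∀ n, ∀ x ∈ gV n, e x ∈ gW (n + l))
    (i m : ℤ) (hm : m = i + l) (x : V) : e (proj gV i x) = proj gW m (e x) := by
  subst hm
  have : e ∘ₗ proj gV i = proj gW (i + l) ∘ₗ e := by
    apply hom_ext gV
    intro n x hx
    simp only [LinearMap.comp_apply]
    by_cases h : n = i
    · subst h
      rw [proj_same gV hx, proj_same gW (he _ _ hx)]
    · rw [proj_ne gV hx h, proj_ne gW (he _ _ hx) (by omega), map_zero]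
  exact LinearMap.congr_fun this x

/-- The homogeneous part of degree `k` of a linear map. -/
def homPart (k : ℤ) (f : V →ₗ[ℚ] W) : V →ₗ[ℚ] W :=
  (DirectSum.toModule ℚ ℤ W fun n => ((proj gW (n + k)).comp f).comp (gV n).subtype).comp
    (DirectSum.decomposeLinearEquiv gV).toLinearMap

theorem homPart_apply (k : ℤ) (f : V →ₗ[ℚ] W) {n : ℤ} {x : V} (hx : x ∈ gV n)
    (m : ℤ) (hm : m = n + k) : homPart gV gW k f x = proj gW m (f x) := by
  subst hm
  lift x to gV n using hx
  simp [homPart, DirectSum.toModule_lof]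

theorem homPart_mem (k : ℤ) (f : V →ₗ[ℚ] W) (n : ℤ) (x : V) (hx : x ∈ gV n) :
    homPart gV gW k f x ∈ gW (n + k) := by
  rw [homPart_apply gV gW k f hx _ rfl]; exact proj_mem _ _ _

theorem parity_apply {n : ℤ} {x : V} (hx : x ∈ gV n) : parityOf gV x = ((-1 : ℚ) ^ n) • x := by
  lift x to gV n using hx
  simp [parityOf, signOpOf, DirectSum.toModule_lof]

theorem neg_one_sq (n : ℤ) : ((-1 : ℚ) ^ n) * ((-1 : ℚ) ^ n) = 1 := by
  rw [← mul_zpow]; simp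

theorem neg_one_pred (n : ℤ) : ((-1 : ℚ) ^ (n - 1)) = - ((-1 : ℚ) ^ n) := by
  rw [zpow_sub_one₀ (by norm_num)]; norm_num

theorem parity_parity (x : V) : parityOf gV (parityOf gV x) = x := by
  have : parityOf gV ∘ₗ parityOf gV = LinearMap.id := by
    apply hom_ext gV
    intro n x hx
    simp [parity_apply gV hx, smul_smul, neg_one_sq]
  exact LinearMap.congr_fun this x

theorem parity_odd (e : V →ₗ[ℚ] W) (he : ∀ n, ∀ x ∈ gV n, e x ∈ gW (n - 1)) (x : V) :
    parityOf gW (e x) = - e (parityOf gV x) := by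
  have : parityOf gW ∘ₗ e = - (e ∘ₗ parityOf gV) := by
    apply hom_ext gV
    intro n x hx
    simp [parity_apply gV hx, parity_apply gW (he _ _ hx), neg_one_pred]
  exact LinearMap.congr_fun this x

end Graded

/-- A square zero-like map with kernel equal to its image has a contraction. -/
theorem exists_contraction {M : Type} [AddCommGroup M] [Module ℚ M] (d : M →ₗ[ℚ] M)
    (hex : ∀ x, d x = 0 → ∃ y, x = d y) (hd : ∀ x, d (d x) = 0) :
    ∃ h : M →ₗ[ℚ] M, ∀ x, d (h x) + h (d x) = x := by
  obtain ⟨s0, hs0⟩ := d.rangeRestrict.exists_rightInverse_of_surjective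
    (LinearMap.range_rangeRestrict d)
  obtain ⟨p, hp⟩ := (LinearMap.range d).subtype.exists_leftInverse_of_injective
    (Submodule.ker_subtype _)
  let s : M →ₗ[ℚ] M := s0 ∘ₗ p
  have hs : ∀ x, d (s (d x)) = d x := by
    intro x
    have h1 : p (d x) = d.rangeRestrict x := LinearMap.congr_fun hp (d.rangeRestrict x)
    have h2 := congrArg Subtype.val (LinearMap.congr_fun hs0 (d.rangeRestrict x))
    simpa [s, h1] using h2
  refine ⟨s - s ∘ₗ s ∘ₗ d, fun x => ?_⟩
  obtain ⟨y, hy⟩ := hex (x - s (d x)) (by rw [map_sub, hs, sub_self])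
  have h3 : d (s (x - s (d x))) = x - s (d x) := by rw [hy, hs]
  simp only [map_sub] at h3
  simp only [LinearMap.sub_apply, LinearMap.comp_apply, map_sub, hd, map_zero, h3]
  abel

section Cone

variable {V W : Type} [AddCommGroup V] [Module ℚ V] [AddCommGroup W] [Module ℚ W]

theorem cone_contraction (dV : V →ₗ[ℚ] V) (dW : W →ₗ[ℚ] W) (f : V →ₗ[ℚ] W)
    (hV : ∀ x, dV (dV x) = 0) (hW : ∀ x, dW (dW x) = 0) (hf : ∀ x, f (dV x) = dW (f x))
    (hq : IsQuasiIso dV dW f) :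
    ∃ (h11 : V →ₗ[ℚ] V) (h12 : W →ₗ[ℚ] V) (h21 : V →ₗ[ℚ] W) (h22 : W →ₗ[ℚ] W),
      (∀ x, -dV (h11 x) - h11 (dV x) + h12 (f x) = x) ∧
      (∀ x, -dV (h12 x) + h12 (dW x) = 0) ∧
      (∀ x, f (h11 x) + dW (h21 x) - h21 (dV x) + h22 (f x) = 0) ∧
      (∀ x, f (h12 x) + dW (h22 x) + h22 (dW x) = x) := by
  let d : V × W →ₗ[ℚ] V × W :=
    LinearMap.prod (-(dV ∘ₗ LinearMap.fst ℚ V W))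
      (f ∘ₗ LinearMap.fst ℚ V W + dW ∘ₗ LinearMap.snd ℚ V W)
  have hd : ∀ a b, d (a, b) = (-dV a, f a + dW b) := fun a b => rfl
  obtain ⟨h, hh⟩ := exists_contraction d (by
    rintro ⟨n, n'⟩ h
    rw [hd, Prod.mk_eq_zero, neg_eq_zero] at h
    obtain ⟨h1, h2⟩ := h
    obtain ⟨z, hz⟩ := hq.1 n h1 ⟨-n', by rw [map_neg]; exact eq_neg_of_add_eq_zero_left h2⟩
    obtain ⟨x, hx, y, hy⟩ := hq.2 (n' + f z) (by
      rw [map_add, ← hf, ← hz, add_comm]; exact h2)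
    refine ⟨(x - z, y), ?_⟩
    rw [hd, map_sub, map_sub, hx, ← hz, ← hy]
    ext
    · simp
    · simp) (by
    rintro ⟨a, b⟩
    rw [hd, hd]
    simp [hV, hW, hf])
  refine ⟨LinearMap.fst ℚ V W ∘ₗ h ∘ₗ LinearMap.inl ℚ V W,
    LinearMap.fst ℚ V W ∘ₗ h ∘ₗ LinearMap.inr ℚ V W,
    LinearMap.snd ℚ V W ∘ₗ h ∘ₗ LinearMap.inl ℚ V W,
    LinearMap.snd ℚ V W ∘ₗ h ∘ₗ LinearMap.inr ℚ V W, ?_, ?_, ?_, ?_⟩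
  all_goals intro x
  all_goals simp only [LinearMap.comp_apply, LinearMap.inl_apply, LinearMap.inr_apply,
      LinearMap.fst_apply, LinearMap.snd_apply]
  · have := congrArg Prod.fst (hh (x, 0))
    have e : ((-dV x, f x) : V × W) = -(dV x, 0) + (0, f x) := by simp
    rw [hd, hd, map_zero, add_zero, e, map_add, map_neg] at this
    simp only [Prod.fst_add, Prod.fst_neg] at this
    rw [← add_assoc, ← sub_eq_add_neg] at this
    exact this
  · have := congrArg Prod.fst (hh (0, x))
    rw [hd, hd, map_zero, map_zero, neg_zero, zero_add] at this
    simpa only [Prod.fst_add, Prod.fst_neg] using this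
  · have := congrArg Prod.snd (hh (x, 0))
    have e : ((-dV x, f x) : V × W) = -(dV x, 0) + (0, f x) := by simp
    rw [hd, hd, map_zero, add_zero, e, map_add, map_neg] at this
    simp only [Prod.snd_add, Prod.snd_neg] at this
    rw [← add_assoc, ← sub_eq_add_neg] at this
    exact this
  · have := congrArg Prod.snd (hh (0, x))
    rw [hd, hd, map_zero, map_zero, neg_zero, zero_add] at this
    simpa only [Prod.snd_add, Prod.snd_neg] using this

theorem perturb (dV : V →ₗ[ℚ] V) (dW : W →ₗ[ℚ] W) (f : V →ₗ[ℚ] W)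
    (hV : ∀ x, dV (dV x) = 0) (hW : ∀ x, dW (dW x) = 0) (hf : ∀ x, f (dV x) = dW (f x))
    (h11 : V →ₗ[ℚ] V) (h12 : W →ₗ[ℚ] V) (h21 : V →ₗ[ℚ] W) (h22 : W →ₗ[ℚ] W)
    (FV : ℤ → Submodule ℚ V) (FW : ℤ → Submodule ℚ W)
    (b : ℤ) (hbV : FV (b - 1) = ⊥) (hbW : FW b = ⊥)
    (mV : Monotone FV) (mW : Monotone FW)
    (eV : ∀ x, ∃ p, x ∈ FV p) (eW : ∀ x, ∃ p, x ∈ FW p)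
    (k11 : ∀ p, ∀ x ∈ FV p, -dV (h11 x) - h11 (dV x) + h12 (f x) - x ∈ FV (p - 1))
    (k12 : ∀ p, ∀ x ∈ FW p, -dV (h12 x) + h12 (dW x) ∈ FV (p - 2))
    (k21 : ∀ p, ∀ x ∈ FV p, f (h11 x) + dW (h21 x) - h21 (dV x) + h22 (f x) ∈ FW p)
    (k22 : ∀ p, ∀ x ∈ FW p, f (h12 x) + dW (h22 x) + h22 (dW x) - x ∈ FW (p - 1)) :
    IsQuasiIso dV dW f := by
  have key : ∀ k : ℕ, ∀ x ∈ FV (b + k - 1), ∀ x' ∈ FW (b + k), dV x = 0 → f x + dW x' = 0 →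
      ∃ m m', x = - dV m ∧ x' = f m + dW m' := by
    intro k
    induction k with
    | zero =>
      intro x hx x' hx' _ _
      simp only [Nat.cast_zero, add_zero] at hx hx'
      rw [hbV, Submodule.mem_bot] at hx
      rw [hbW, Submodule.mem_bot] at hx'
      exact ⟨0, 0, by simp [hx], by simp [hx']⟩
    | succ k ih =>
      intro x hx x' hx' h1 h2
      have c1 := k11 _ x hx
      have c2 := k12 _ x' hx'
      have c3 := k21 _ x hx
      have c4 := k22 _ x' hx'
      have s1 := (FV (b + k - 1)).neg_mem ((FV (b + k - 1)).add_mem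
        (mV (by push_cast; omega) c1) (mV (by push_cast; omega) c2))
      have s2 := (FW (b + k)).neg_mem ((FW (b + k)).add_mem
        (mW (by push_cast; omega) c3) (mW (by push_cast; omega) c4))
      have q1 : h12 (dW x') = - h12 (f x) := by
        rw [← map_neg]; congr 1; exact eq_neg_of_add_eq_zero_right h2
      have q2 : h22 (dW x') = - h22 (f x) := by
        rw [← map_neg]; congr 1; exact eq_neg_of_add_eq_zero_right h2
      obtain ⟨m, m', e1, e2⟩ := ih _ s1 _ s2 (by
          simp only [map_neg, map_add, map_sub, q1, h1, hV, map_zero]; abel) (by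
          simp only [map_neg, map_add, map_sub, q1, q2, h1, hW, hf, map_zero]
          rw [← h2]; abel)
      refine ⟨m + h11 x + h12 x', m' + h21 x + h22 x', ?_, ?_⟩
      · simp only [map_add, neg_add, ← e1, q1, h1, map_zero]; abel
      · have : f (m + h11 x + h12 x') + dW (m' + h21 x + h22 x')
          = (f m + dW m') + (f (h11 x) + f (h12 x') + dW (h21 x) + dW (h22 x')) := by
          simp only [map_add]; abel
        rw [this, ← e2, q2, h1, map_zero]; abel
  have key' : ∀ x x', dV x = 0 → f x + dW x' = 0 →
      ∃ m m', x = - dV m ∧ x' = f m + dW m' := by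
    intro x x'
    obtain ⟨p, hp⟩ := eV x
    obtain ⟨q, hq⟩ := eW x'
    exact key ((p + 1 - b).toNat + (q - b).toNat) x (mV (by push_cast; omega) hp) x' (mW (by push_cast; omega) hq)
  refine ⟨fun x hx ⟨y, hy⟩ => ?_, fun w hw => ?_⟩
  · obtain ⟨m, m', e1, e2⟩ := key' x (-y) hx (by rw [hy, map_neg, add_neg_cancel])
    exact ⟨-m, by rw [map_neg, e1]⟩
  · obtain ⟨m, m', e1, e2⟩ := key' 0 w (map_zero _) (by rw [map_zero, hw, add_zero])
    exact ⟨m, by rw [← neg_eq_zero, ← e1], m', by rw [e2]; abel⟩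

end Cone

section Twist

variable {C : DGCoalgebra} {A : DGAlgebra} (τ : TwistingChain C A)

theorem d_d (V : DGVect) (x : V.carrier) : V.d (V.d x) = 0 := LinearMap.congr_fun V.d_sq x

theorem leibniz' (x y : A.carrier) :
    A.d (A.mul x y) = A.mul (A.d x) y + A.mul (parityOf A.grading x) (A.d y) := by
  have : A.mul.compr₂ A.d = A.mul.comp A.d + (A.mul.compl₂ A.d).comp (parityOf A.grading) := by
    apply hom_ext A.grading
    intro n x hx
    ext y
    simp [A.leibniz n x y hx, parity_apply A.grading hx]
  exact LinearMap.congr_fun (LinearMap.congr_fun this x) y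

theorem parity_mul (x y : A.carrier) : parityOf A.grading (A.mul x y)
    = A.mul (parityOf A.grading x) (parityOf A.grading y) := by
  have : A.mul.compr₂ (parityOf A.grading)
      = (A.mul.compl₂ (parityOf A.grading)).comp (parityOf A.grading) := by
    apply hom_ext A.grading
    intro n x hx
    apply hom_ext A.grading
    intro m y hy
    simp [parity_apply A.grading hx, parity_apply A.grading hy,
      parity_apply A.grading (A.mul_mem _ _ _ _ hx hy), smul_smul,
      zpow_add₀ (show (-1 : ℚ) ≠ 0 by norm_num)]
  exact LinearMap.congr_fun (LinearMap.congr_fun this x) y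

variable {N N' : Type} [AddCommGroup N] [Module ℚ N] [AddCommGroup N'] [Module ℚ N']

/-- `c ⊗ n ↦ a τ(c) ⊗ n`. -/
def act (N : Type) [AddCommGroup N] [Module ℚ N] (a : A.carrier) :
    C.carrier ⊗[ℚ] N →ₗ[ℚ] A.carrier ⊗[ℚ] N :=
  TensorProduct.map ((A.mul a).comp τ.toFun) LinearMap.id

@[simp] theorem act_tmul (a : A.carrier) (c : C.carrier) (n : N) :
    act τ N a (c ⊗ₜ n) = A.mul a (τ.toFun c) ⊗ₜ n := rfl

/-- The twisting term of the differential. -/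
def tw (ρ : N →ₗ[ℚ] C.carrier ⊗[ℚ] N) : A.carrier ⊗[ℚ] N →ₗ[ℚ] A.carrier ⊗[ℚ] N :=
  (TensorProduct.map
        (A.mulMap.comp (TensorProduct.map (parityOf A.grading) τ.toFun)) LinearMap.id).comp
        ((TensorProduct.assoc ℚ A.carrier C.carrier N).symm.toLinearMap.comp
          (TensorProduct.map LinearMap.id ρ))

theorem tw_tmul (ρ : N →ₗ[ℚ] C.carrier ⊗[ℚ] N) (a : A.carrier) (n : N) :
    tw τ ρ (a ⊗ₜ n) = act τ N (parityOf A.grading a) (ρ n) := by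
  simp only [tw, LinearMap.comp_apply, TensorProduct.map_tmul, LinearMap.id_apply]
  generalize ρ n = z
  induction z with
  | zero => simp
  | tmul c m => simp [DGAlgebra.mulMap]
  | add x y hx hy => rw [TensorProduct.tmul_add, map_add, map_add, hx, hy, map_add]

theorem extDiff_tmul (dN : N →ₗ[ℚ] N) (ρ : N →ₗ[ℚ] C.carrier ⊗[ℚ] N) (a : A.carrier) (n : N) :
    extDiff C A τ N dN ρ (a ⊗ₜ n) = A.d a ⊗ₜ n + parityOf A.grading a ⊗ₜ dN n
      - act τ N (parityOf A.grading a) (ρ n) := by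
  rw [← tw_tmul]; rfl

theorem extDiff_extDiff (N : DGComodule C) (x : A.carrier ⊗[ℚ] N.carrier) :
    extDiff C A τ N.carrier N.d N.coact (extDiff C A τ N.carrier N.d N.coact x) = 0 := by
  have hPP := parity_parity A.grading
  have hPd := parity_odd A.grading A.grading A.d A.d_mem
  have hPτ := parity_odd C.grading A.grading τ.toFun τ.mem
  induction x with
  | zero => simp
  | add x y hx hy => rw [map_add, map_add, hx, hy, add_zero]
  | tmul a n =>
    set P := parityOf A.grading with hP
    have E1 : ∀ z : C.carrier ⊗[ℚ] N.carrier,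
        extDiff C A τ N.carrier N.d N.coact (act τ N.carrier (P a) z)
        = act τ N.carrier (A.d (P a)) z
          + TensorProduct.map ((A.mul a).comp (A.d.comp τ.toFun)) LinearMap.id z
          - TensorProduct.map ((A.mul a).comp (τ.toFun.comp (parityOf C.grading))) N.d z
          + (TensorProduct.map ((A.mul a).comp (A.mulMap.comp
            (TensorProduct.map (τ.toFun.comp (parityOf C.grading)) τ.toFun))) LinearMap.id)
              ((TensorProduct.assoc ℚ C.carrier C.carrier N.carrier).symm
                (TensorProduct.map LinearMap.id N.coact z)) := by
      intro z
      induction z with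
      | zero => simp
      | add x y hx hy => simp only [map_add, hx, hy]; abel
      | tmul c m =>
        rw [act_tmul, extDiff_tmul, leibniz', ← hP, parity_mul, ← hP, hPP, hPτ]
        have E3 : ∀ w : C.carrier ⊗[ℚ] N.carrier,
          act τ N.carrier (A.mul a (-τ.toFun (parityOf C.grading c))) w = 
          - (TensorProduct.map ((A.mul a).comp (A.mulMap.comp
            (TensorProduct.map (τ.toFun.comp (parityOf C.grading)) τ.toFun))) LinearMap.id)
              ((TensorProduct.assoc ℚ C.carrier C.carrier N.carrier).symm (c ⊗ₜ w)) := by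
          intro w
          induction w with
          | zero => simp
          | add x y hx hy => rw [map_add, hx, hy, TensorProduct.tmul_add, map_add, map_add, neg_add]
          | tmul c' m => simp [DGAlgebra.mulMap, A.mul_assoc', TensorProduct.neg_tmul]
        rw [E3]
        simp only [act_tmul, TensorProduct.map_tmul, LinearMap.comp_apply, LinearMap.id_apply,
          TensorProduct.add_tmul, map_neg, TensorProduct.neg_tmul]
        abel
    have E2 : act τ N.carrier a (N.coact (N.d n))
        = TensorProduct.map ((A.mul a).comp (τ.toFun.comp C.d)) LinearMap.id (N.coact n)
         + TensorProduct.map ((A.mul a).comp (τ.toFun.comp (parityOf C.grading))) N.d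
            (N.coact n) := by
      have := LinearMap.congr_fun N.coact_chain n
      simp only [LinearMap.comp_apply] at this
      rw [this]
      generalize N.coact n = z
      induction z with
      | zero => simp
      | add x y hx hy => simp only [map_add, hx, hy]; abel
      | tmul c m => simp
    have E4 := LinearMap.congr_fun N.coassoc n
    simp only [LinearMap.comp_apply, LinearEquiv.coe_coe] at E4
    rw [extDiff_tmul, map_sub, map_add, extDiff_tmul, extDiff_tmul, ← hP, E1, hPP, hPd, E2,
      ← E4, LinearEquiv.symm_apply_apply, d_d, d_d]
    have E5 : ∀ z : C.carrier ⊗[ℚ] N.carrier,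
        TensorProduct.map ((A.mul a).comp (A.d.comp τ.toFun)) LinearMap.id z
        + TensorProduct.map ((A.mul a).comp (τ.toFun.comp C.d)) LinearMap.id z
        + (TensorProduct.map ((A.mul a).comp (A.mulMap.comp
            (TensorProduct.map (τ.toFun.comp (parityOf C.grading)) τ.toFun))) LinearMap.id)
            (TensorProduct.map C.comul LinearMap.id z) = 0 := by
      intro z
      induction z with
      | zero => simp
      | add x y hx hy =>
        have := congrArg₂ (· + ·) hx hy
        simp only [add_zero] at this
        rw [← this]
        simp only [map_add]; abel
      | tmul c m =>
        have := LinearMap.congr_fun τ.twist c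
        simp only [LinearMap.add_apply, LinearMap.comp_apply, LinearMap.zero_apply] at this
        simp only [TensorProduct.map_tmul, LinearMap.comp_apply, LinearMap.id_apply]
        rw [← TensorProduct.add_tmul, ← TensorProduct.add_tmul, ← map_add, ← map_add, this,
          map_zero, TensorProduct.zero_tmul]
    have E6 := E5 (N.coact n)
    rw [← neg_eq_zero, ← E6]
    have E7 : act τ N.carrier (-A.d (P a)) (N.coact n)
        = - act τ N.carrier (A.d (P a)) (N.coact n) := by
      generalize N.coact n = z
      induction z with
      | zero => simp
      | add x y hx hy => simp only [map_add, hx, hy, neg_add]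
      | tmul c m => simp [TensorProduct.neg_tmul]
    rw [E7, TensorProduct.neg_tmul, TensorProduct.zero_tmul, TensorProduct.tmul_zero]
    abel

theorem extDiff_map (N N' : DGComodule C) (g : N.carrier →ₗ[ℚ] N'.carrier)
    (hg : IsComoduleHom C N N' g) (x : A.carrier ⊗[ℚ] N.carrier) :
    TensorProduct.map LinearMap.id g (extDiff C A τ N.carrier N.d N.coact x)
      = extDiff C A τ N'.carrier N'.d N'.coact (TensorProduct.map LinearMap.id g x) := by
  induction x with
  | zero => simp
  | add x y hx hy => simp only [map_add, hx, hy]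
  | tmul a n =>
    have h1 := LinearMap.congr_fun hg.2.1 n
    have h2 := LinearMap.congr_fun hg.2.2 n
    simp only [LinearMap.comp_apply] at h1 h2
    rw [extDiff_tmul, TensorProduct.map_tmul, extDiff_tmul, ← h1, ← h2]
    generalize N.coact n = z
    have : TensorProduct.map LinearMap.id g (act τ N.carrier (parityOf A.grading a) z)
      = act τ N'.carrier (parityOf A.grading a) (TensorProduct.map LinearMap.id g z) := by
      induction z with
      | zero => simp
      | add x y hx hy => simp only [map_add, hx, hy]
      | tmul c m => simp
    rw [map_sub, map_add, this]
    simp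

/-- Filtration by the degree of the second factor. -/
def fil (A : DGAlgebra) {N : Type} [AddCommGroup N] [Module ℚ N] (gN : ℤ → Submodule ℚ N) (p : ℤ) :
    Submodule ℚ (A.carrier ⊗[ℚ] N) :=
  Submodule.span ℚ {x | ∃ (a : A.carrier) (j : ℤ) (n : N), j ≤ p ∧ n ∈ gN j ∧ x = a ⊗ₜ n}

theorem fil_mono (gN : ℤ → Submodule ℚ N) : Monotone (fil A gN) := by
  intro p q h
  apply Submodule.span_mono
  rintro x ⟨a, j, n, hj, hn, rfl⟩
  exact ⟨a, j, n, hj.trans h, hn, rfl⟩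

theorem tmul_mem_fil (gN : ℤ → Submodule ℚ N) (a : A.carrier) {j p : ℤ} {n : N} (hj : j ≤ p)
    (hn : n ∈ gN j) : a ⊗ₜ n ∈ fil A gN p :=
  Submodule.subset_span ⟨a, j, n, hj, hn, rfl⟩

theorem fil_bot (gN : ℤ → Submodule ℚ N) {b p : ℤ} (hb : ∀ n : ℤ, n < b → gN n = ⊥) (h : p < b) :
    fil A gN p = ⊥ := by
  rw [eq_bot_iff, fil, Submodule.span_le]
  rintro x ⟨a, j, n, hj, hn, rfl⟩
  rw [hb j (by omega), Submodule.mem_bot] at hn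
  simp [hn]

theorem fil_ex (gN : ℤ → Submodule ℚ N) [DirectSum.Decomposition gN] (x : A.carrier ⊗[ℚ] N) :
    ∃ p, x ∈ fil A gN p := by
  have hadd : ∀ x y : A.carrier ⊗[ℚ] N, (∃ p, x ∈ fil A gN p) → (∃ p, y ∈ fil A gN p) →
      ∃ p, x + y ∈ fil A gN p := by
    rintro x y ⟨p, hp⟩ ⟨q, hq⟩
    exact ⟨max p q, Submodule.add_mem _ (fil_mono gN (le_max_left _ _) hp)
      (fil_mono gN (le_max_right _ _) hq)⟩
  induction x with
  | zero => exact ⟨0, Submodule.zero_mem _⟩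
  | add x y hx hy => exact hadd _ _ hx hy
  | tmul a n =>
    induction n using DirectSum.Decomposition.inductionOn gN with
    | zero => exact ⟨0, by simp⟩
    | homogeneous m => exact ⟨_, tmul_mem_fil gN a le_rfl m.2⟩
    | add n m hn hm => rw [TensorProduct.tmul_add]; exact hadd _ _ hn hm

theorem fil_map_mem (gN : ℤ → Submodule ℚ N) (gN' : ℤ → Submodule ℚ N')
    (F : A.carrier ⊗[ℚ] N →ₗ[ℚ] A.carrier ⊗[ℚ] N') (k : ℤ)
    (hF : ∀ a j, ∀ n ∈ gN j, F (a ⊗ₜ n) ∈ fil A gN' (j + k)) {p q : ℤ} (hq : p + k ≤ q)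
    {x} (hx : x ∈ fil A gN p) : F x ∈ fil A gN' q := by
  have : fil A gN p ≤ (fil A gN' q).comap F := by
    rw [fil, Submodule.span_le]
    rintro x ⟨a, j, n, hj, hn, rfl⟩
    exact fil_mono gN' (by omega) (hF a j n hn)
  exact this hx

theorem fil_map (gN : ℤ → Submodule ℚ N) (gN' : ℤ → Submodule ℚ N')
    (e : A.carrier →ₗ[ℚ] A.carrier) (h : N →ₗ[ℚ] N') (k : ℤ)
    (hh : ∀ j, ∀ n ∈ gN j, h n ∈ gN' (j + k)) {p q : ℤ} (hq : p + k ≤ q)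
    {x} (hx : x ∈ fil A gN p) : TensorProduct.map e h x ∈ fil A gN' q := by
  refine fil_map_mem gN gN' _ k (fun a j n hn => ?_) hq hx
  exact tmul_mem_fil _ _ le_rfl (hh j n hn)

theorem fil_tw (hA : A.Connective) (hC : C.grading 1 = ⊥) (N : DGComodule C) {p q : ℤ}
    (hq : p - 2 ≤ q) {x} (hx : x ∈ fil A N.grading p) :
    tw τ N.coact x ∈ fil A N.grading q := by
  refine fil_map_mem N.grading N.grading _ (-2) (fun a j n hn => ?_) (by omega) hx
  rw [tw_tmul]
  have h := N.coact_mem j n hn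
  have : tensorGrading C.grading N.grading j ≤
      (fil A N.grading (j + -2)).comap (act τ N.carrier (parityOf A.grading a)) := by
    rw [tensorGrading, iSup_le_iff]
    rintro ⟨⟨i, l⟩, hil⟩
    rw [LinearMap.range_le_iff_comap, eq_top_iff]
    rintro z -
    simp only [Submodule.mem_comap]
    induction z with
    | zero => simp
    | add x y hx hy => simp only [map_add]; exact Submodule.add_mem _ hx hy
    | tmul c m =>
      obtain ⟨c, hc⟩ := c
      obtain ⟨m, hm⟩ := m
      simp only at hil hc hm
      simp only [TensorProduct.map_tmul, Submodule.subtype_apply, act_tmul]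
      by_cases hi : 2 ≤ i
      · exact tmul_mem_fil _ _ (by omega) hm
      · have h0 : τ.toFun c = 0 := by
          by_cases h1 : i = 1
          · subst h1
            rw [hC, Submodule.mem_bot] at hc
            rw [hc, map_zero]
          · have := τ.mem i c hc
            rwa [hA _ (by omega), Submodule.mem_bot] at this
        simp [h0]
  exact this h

theorem extDiff_eq (N : DGComodule C) (x : A.carrier ⊗[ℚ] N.carrier) :
    extDiff C A τ N.carrier N.d N.coact x = TensorProduct.map A.d LinearMap.id x
      + TensorProduct.map (parityOf A.grading) N.d x - tw τ N.coact x := rfl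

/-- The contraction of the cone can be chosen homogeneous. -/
theorem graded_contraction (V W : DGVect) (f : V.carrier →ₗ[ℚ] W.carrier)
    (hfm : ∀ n, ∀ x ∈ V.grading n, f x ∈ W.grading n) (hf : ∀ x, f (V.d x) = W.d (f x))
    (hq : IsQuasiIso V.d W.d f) :
    ∃ (h11 : V.carrier →ₗ[ℚ] V.carrier) (h12 : W.carrier →ₗ[ℚ] V.carrier)
      (h21 : V.carrier →ₗ[ℚ] W.carrier) (h22 : W.carrier →ₗ[ℚ] W.carrier),
      (∀ n, ∀ x ∈ V.grading n, h11 x ∈ V.grading (n + 1)) ∧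
      (∀ n, ∀ x ∈ W.grading n, h12 x ∈ V.grading (n + 0)) ∧
      (∀ n, ∀ x ∈ V.grading n, h21 x ∈ W.grading (n + 2)) ∧
      (∀ n, ∀ x ∈ W.grading n, h22 x ∈ W.grading (n + 1)) ∧
      (-(V.d ∘ₗ h11) - h11 ∘ₗ V.d + h12 ∘ₗ f = LinearMap.id) ∧
      (-(V.d ∘ₗ h12) + h12 ∘ₗ W.d = 0) ∧
      (f ∘ₗ h11 + W.d ∘ₗ h21 - h21 ∘ₗ V.d + h22 ∘ₗ f = 0) ∧
      (f ∘ₗ h12 + W.d ∘ₗ h22 + h22 ∘ₗ W.d = LinearMap.id) := by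
  obtain ⟨h11, h12, h21, h22, e1, e2, e3, e4⟩ := cone_contraction V.d W.d f (d_d V) (d_d W) hf hq
  have cV := proj_comm V.grading V.grading V.d (-1) V.d_mem
  have cW := proj_comm W.grading W.grading W.d (-1) W.d_mem
  have cf := proj_comm V.grading W.grading f 0 (by simpa using hfm)
  refine ⟨homPart V.grading V.grading 1 h11, homPart W.grading V.grading 0 h12,
    homPart V.grading W.grading 2 h21, homPart W.grading W.grading 1 h22,
    homPart_mem _ _ _ _, homPart_mem _ _ _ _, homPart_mem _ _ _ _, homPart_mem _ _ _ _,
    ?_, ?_, ?_, ?_⟩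
  · apply hom_ext V.grading
    intro n x hx
    simp only [LinearMap.add_apply, LinearMap.sub_apply, LinearMap.neg_apply,
      LinearMap.comp_apply, LinearMap.id_apply]
    rw [homPart_apply _ _ 1 h11 hx (n + 1) rfl,
      homPart_apply _ _ 1 h11 (V.d_mem n x hx) n (by omega),
      homPart_apply _ _ 0 h12 (hfm n x hx) n (by omega), cV (n + 1) n (by omega),
      ← map_neg, ← map_sub, ← map_add, e1, proj_same _ hx]
  · apply hom_ext W.grading
    intro n x hx
    simp only [LinearMap.add_apply, LinearMap.neg_apply,
      LinearMap.comp_apply, LinearMap.zero_apply]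
    rw [homPart_apply _ _ 0 h12 hx n (by omega),
      homPart_apply _ _ 0 h12 (W.d_mem n x hx) (n - 1) (by omega), cV n (n - 1) (by omega),
      ← map_neg, ← map_add, e2, map_zero]
  · apply hom_ext V.grading
    intro n x hx
    simp only [LinearMap.add_apply, LinearMap.sub_apply,
      LinearMap.comp_apply, LinearMap.zero_apply]
    rw [homPart_apply _ _ 1 h11 hx (n + 1) rfl, homPart_apply _ _ 2 h21 hx (n + 2) rfl,
      homPart_apply _ _ 2 h21 (V.d_mem n x hx) (n + 1) (by omega),
      homPart_apply _ _ 1 h22 (hfm n x hx) (n + 1) (by omega), cW (n + 2) (n + 1) (by omega),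
      cf (n + 1) (n + 1) (by omega), ← map_add, ← map_sub, ← map_add, e3, map_zero]
  · apply hom_ext W.grading
    intro n x hx
    simp only [LinearMap.add_apply, LinearMap.comp_apply, LinearMap.id_apply]
    rw [homPart_apply _ _ 0 h12 hx n (by omega), homPart_apply _ _ 1 h22 hx (n + 1) rfl,
      homPart_apply _ _ 1 h22 (W.d_mem n x hx) n (by omega), cW (n + 1) n (by omega),
      cf n n (by omega), ← map_add, ← map_add, e4, proj_same _ hx]

end Twist

end TwExt
/-! ## Statement 16: twisted extension preserves quasi-isomorphisms of bounded
below comodules -/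

/-- Let `C` be a 2-reduced dg coalgebra, `A` a connective dg algebra
and `τ : C ⇝ A` a twisting chain.  If `g : N → N'` is a quasi-isomorphism between
bounded below left dg `C`-comodules, then the induced map of twisted extensions
`A ⊗_τ N → A ⊗_τ N'` is a quasi-isomorphism. -/
theorem twisted_extension_preserves_quasiIso_of_boundedBelow
    (C : CoaugDGCoalgebra) (hred : C.TwoReduced)
    (A : DGAlgebra) (hA : A.Connective) (τ : TwistingChain C.toDGCoalgebra A)
    (N N' : DGComodule C.toDGCoalgebra)
    (hN : N.toDGVect.BoundedBelow) (hN' : N'.toDGVect.BoundedBelow)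
    (g : N.carrier →ₗ[ℚ] N'.carrier) (hg : IsComoduleHom C.toDGCoalgebra N N' g)
    (hq : IsQuasiIso N.d N'.d g) :
    IsQuasiIso
      (extDiff C.toDGCoalgebra A τ N.carrier N.d N.coact)
      (extDiff C.toDGCoalgebra A τ N'.carrier N'.d N'.coact)
      (TensorProduct.map LinearMap.id g) := by
  have hgd : ∀ x, g (N.d x) = N'.d (g x) := fun x => LinearMap.congr_fun hg.2.1 x
  obtain ⟨h11, h12, h21, h22, m11, m12, m21, m22, e1, e2, e3, e4⟩ :=
    TwExt.graded_contraction N.toDGVect N'.toDGVect g hg.1 hgd hq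
  obtain ⟨b1, hb1⟩ := hN
  obtain ⟨b2, hb2⟩ := hN'
  have hPP := TwExt.parity_parity A.grading
  have hPd := TwExt.parity_odd A.grading A.grading A.d A.d_mem
  refine TwExt.perturb _ _ _ (TwExt.extDiff_extDiff τ N) (TwExt.extDiff_extDiff τ N')
    (TwExt.extDiff_map τ N N' g hg)
    (TensorProduct.map (parityOf A.grading) h11) (TensorProduct.map LinearMap.id h12)
    (TensorProduct.map LinearMap.id h21) (TensorProduct.map (parityOf A.grading) h22)
    (TwExt.fil A N.grading) (TwExt.fil A N'.grading) (min b1 b2 - 1)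
    (TwExt.fil_bot _ hb1 (by omega)) (TwExt.fil_bot _ hb2 (by omega))
    (TwExt.fil_mono _) (TwExt.fil_mono _) (TwExt.fil_ex _) (TwExt.fil_ex _) ?_ ?_ ?_ ?_
  all_goals intro p x hx
  · have base : -(TensorProduct.map A.d LinearMap.id (TensorProduct.map (parityOf A.grading) h11 x) + TensorProduct.map (parityOf A.grading) N.d (TensorProduct.map (parityOf A.grading) h11 x)) - TensorProduct.map (parityOf A.grading) h11 (TensorProduct.map A.d LinearMap.id x + TensorProduct.map (parityOf A.grading) N.d x) + TensorProduct.map LinearMap.id h12 (TensorProduct.map LinearMap.id g x)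
        = x := by
      clear hx
      induction x with
      | zero => simp
      | add x y hx hy =>
        conv_rhs => rw [← hx, ← hy]
        simp only [map_add]; abel
      | tmul a n =>
        have e := congrArg (fun z => a ⊗ₜ[ℚ] z) (LinearMap.congr_fun e1 n)
        simp only [LinearMap.add_apply, LinearMap.sub_apply, LinearMap.neg_apply,
          LinearMap.comp_apply, LinearMap.id_apply, LinearMap.zero_apply, TensorProduct.tmul_zero,
          TensorProduct.tmul_add, TensorProduct.tmul_sub, TensorProduct.tmul_neg] at e
        simp only [map_add, TensorProduct.map_tmul, LinearMap.id_apply, hPP, hPd, TensorProduct.neg_tmul]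
        refine Eq.trans ?_ e
        abel
    have key : -extDiff C.toDGCoalgebra A τ N.carrier N.d N.coact (TensorProduct.map (parityOf A.grading) h11 x) - TensorProduct.map (parityOf A.grading) h11 (extDiff C.toDGCoalgebra A τ N.carrier N.d N.coact x) + TensorProduct.map LinearMap.id h12 (TensorProduct.map LinearMap.id g x) - x
        = TwExt.tw τ N.coact (TensorProduct.map (parityOf A.grading) h11 x) + TensorProduct.map (parityOf A.grading) h11 (TwExt.tw τ N.coact x) := by
      rw [TwExt.extDiff_eq, TwExt.extDiff_eq]
      rw [← sub_eq_zero] at base ⊢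
      refine Eq.trans ?_ base
      simp only [map_sub, map_add]
      abel
    rw [key]
    exact Submodule.add_mem _
      (TwExt.fil_tw τ hA hred.2 N (p := p + 1) (by omega)
        (TwExt.fil_map _ _ _ _ 1 m11 le_rfl hx))
      (TwExt.fil_map _ _ _ _ 1 m11 (by omega) (TwExt.fil_tw τ hA hred.2 N le_rfl hx))
  · have base : -(TensorProduct.map A.d LinearMap.id (TensorProduct.map LinearMap.id h12 x) + TensorProduct.map (parityOf A.grading) N.d (TensorProduct.map LinearMap.id h12 x)) + TensorProduct.map LinearMap.id h12 (TensorProduct.map A.d LinearMap.id x + TensorProduct.map (parityOf A.grading) N'.d x)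
        = 0 := by
      clear hx
      induction x with
      | zero => simp
      | add x y hx hy =>
        have h := congrArg₂ (· + ·) hx hy
        simp only [add_zero] at h
        refine Eq.trans ?_ h
        simp only [map_add]; abel
      | tmul a n =>
        have e := congrArg (fun z => parityOf A.grading a ⊗ₜ[ℚ] z) (LinearMap.congr_fun e2 n)
        simp only [LinearMap.add_apply, LinearMap.sub_apply, LinearMap.neg_apply,
          LinearMap.comp_apply, LinearMap.id_apply, LinearMap.zero_apply, TensorProduct.tmul_zero,
          TensorProduct.tmul_add, TensorProduct.tmul_sub, TensorProduct.tmul_neg] at e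
        simp only [map_add, TensorProduct.map_tmul, LinearMap.id_apply, hPP, hPd, TensorProduct.neg_tmul]
        refine Eq.trans ?_ e
        abel
    have key : -extDiff C.toDGCoalgebra A τ N.carrier N.d N.coact (TensorProduct.map LinearMap.id h12 x) + TensorProduct.map LinearMap.id h12 (extDiff C.toDGCoalgebra A τ N'.carrier N'.d N'.coact x)
        = TwExt.tw τ N.coact (TensorProduct.map LinearMap.id h12 x) - TensorProduct.map LinearMap.id h12 (TwExt.tw τ N'.coact x) := by
      rw [TwExt.extDiff_eq, TwExt.extDiff_eq]
      rw [← sub_eq_zero] at base ⊢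
      refine Eq.trans ?_ base
      simp only [map_sub, map_add]
      abel
    rw [key]
    exact Submodule.sub_mem _
      (TwExt.fil_tw τ hA hred.2 N (p := p + 0) (by omega)
        (TwExt.fil_map _ _ _ _ 0 m12 le_rfl hx))
      (TwExt.fil_map _ _ _ _ 0 m12 (by omega) (TwExt.fil_tw τ hA hred.2 N' le_rfl hx))
  · have base : TensorProduct.map LinearMap.id g (TensorProduct.map (parityOf A.grading) h11 x) + (TensorProduct.map A.d LinearMap.id (TensorProduct.map LinearMap.id h21 x) + TensorProduct.map (parityOf A.grading) N'.d (TensorProduct.map LinearMap.id h21 x)) - TensorProduct.map LinearMap.id h21 (TensorProduct.map A.d LinearMap.id x + TensorProduct.map (parityOf A.grading) N.d x) + TensorProduct.map (parityOf A.grading) h22 (TensorProduct.map LinearMap.id g x)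
        = 0 := by
      clear hx
      induction x with
      | zero => simp
      | add x y hx hy =>
        have h := congrArg₂ (· + ·) hx hy
        simp only [add_zero] at h
        refine Eq.trans ?_ h
        simp only [map_add]; abel
      | tmul a n =>
        have e := congrArg (fun z => parityOf A.grading a ⊗ₜ[ℚ] z) (LinearMap.congr_fun e3 n)
        simp only [LinearMap.add_apply, LinearMap.sub_apply, LinearMap.neg_apply,
          LinearMap.comp_apply, LinearMap.id_apply, LinearMap.zero_apply, TensorProduct.tmul_zero,
          TensorProduct.tmul_add, TensorProduct.tmul_sub, TensorProduct.tmul_neg] at e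
        simp only [map_add, TensorProduct.map_tmul, LinearMap.id_apply, hPP, hPd, TensorProduct.neg_tmul]
        refine Eq.trans ?_ e
        abel
    have key : TensorProduct.map LinearMap.id g (TensorProduct.map (parityOf A.grading) h11 x) + extDiff C.toDGCoalgebra A τ N'.carrier N'.d N'.coact (TensorProduct.map LinearMap.id h21 x) - TensorProduct.map LinearMap.id h21 (extDiff C.toDGCoalgebra A τ N.carrier N.d N.coact x) + TensorProduct.map (parityOf A.grading) h22 (TensorProduct.map LinearMap.id g x)
        = TensorProduct.map LinearMap.id h21 (TwExt.tw τ N.coact x) - TwExt.tw τ N'.coact (TensorProduct.map LinearMap.id h21 x) := by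
      rw [TwExt.extDiff_eq, TwExt.extDiff_eq]
      rw [← sub_eq_zero] at base ⊢
      refine Eq.trans ?_ base
      simp only [map_sub, map_add]
      abel
    rw [key]
    exact Submodule.sub_mem _
      (TwExt.fil_map _ _ _ _ 2 m21 (by omega) (TwExt.fil_tw τ hA hred.2 N le_rfl hx))
      (TwExt.fil_tw τ hA hred.2 N' (p := p + 2) (by omega)
        (TwExt.fil_map _ _ _ _ 2 m21 le_rfl hx))
  · have base : TensorProduct.map LinearMap.id g (TensorProduct.map LinearMap.id h12 x) + (TensorProduct.map A.d LinearMap.id (TensorProduct.map (parityOf A.grading) h22 x) + TensorProduct.map (parityOf A.grading) N'.d (TensorProduct.map (parityOf A.grading) h22 x)) + TensorProduct.map (parityOf A.grading) h22 (TensorProduct.map A.d LinearMap.id x + TensorProduct.map (parityOf A.grading) N'.d x)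
        = x := by
      clear hx
      induction x with
      | zero => simp
      | add x y hx hy =>
        conv_rhs => rw [← hx, ← hy]
        simp only [map_add]; abel
      | tmul a n =>
        have e := congrArg (fun z => a ⊗ₜ[ℚ] z) (LinearMap.congr_fun e4 n)
        simp only [LinearMap.add_apply, LinearMap.sub_apply, LinearMap.neg_apply,
          LinearMap.comp_apply, LinearMap.id_apply, LinearMap.zero_apply, TensorProduct.tmul_zero,
          TensorProduct.tmul_add, TensorProduct.tmul_sub, TensorProduct.tmul_neg] at e
        simp only [map_add, TensorProduct.map_tmul, LinearMap.id_apply, hPP, hPd, TensorProduct.neg_tmul]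
        refine Eq.trans ?_ e
        abel
    have key : TensorProduct.map LinearMap.id g (TensorProduct.map LinearMap.id h12 x) + extDiff C.toDGCoalgebra A τ N'.carrier N'.d N'.coact (TensorProduct.map (parityOf A.grading) h22 x) + TensorProduct.map (parityOf A.grading) h22 (extDiff C.toDGCoalgebra A τ N'.carrier N'.d N'.coact x) - x
        = -TwExt.tw τ N'.coact (TensorProduct.map (parityOf A.grading) h22 x) - TensorProduct.map (parityOf A.grading) h22 (TwExt.tw τ N'.coact x) := by
      rw [TwExt.extDiff_eq, TwExt.extDiff_eq]
      rw [← sub_eq_zero] at base ⊢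
      refine Eq.trans ?_ base
      simp only [map_sub, map_add]
      abel
    rw [key]
    exact Submodule.sub_mem _
      (Submodule.neg_mem _ (TwExt.fil_tw τ hA hred.2 N' (p := p + 1) (by omega)
        (TwExt.fil_map _ _ _ _ 1 m22 le_rfl hx)))
      (TwExt.fil_map _ _ _ _ 1 m22 (by omega) (TwExt.fil_tw τ hA hred.2 N' le_rfl hx))

end
end
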